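/- Let Γ = ℤ^5 ⋊ ℤ/8 where the generator of ℤ/8 acts on ℤ^5 by the matrix [[0,0,0,0,-1],[1,0,0,0,-1],[0,1,0,0,0],[0,0,1,0,0],[0,0,0,1,-1]], and let G = ℤ/8, L = ℤ^5 with this action. Then there exists k ≥ 0 such that H^k(Γ, ℤ) is not isomorphic to ⊕_{i+j=k} H^i(G, H^j(L, ℤ)). -/

import Mathlib

open Matrix

namespace Crystal

/-- The lattice `ℤ^n`, written multiplicatively so that it can be a factor of a semidirect
product of groups. -/
abbrev Lat (n : ℕ) : Type := Multiplicative (Fin n → ℤ)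

/-- The invertible integer matrix determined by `M` with `M ^ (m + 1) = 1`. -/
def matUnit {n : ℕ} (M : Matrix (Fin n) (Fin n) ℤ) (m : ℕ) (hm : M ^ (m + 1) = 1) :
    (Matrix (Fin n) (Fin n) ℤ)ˣ :=
  ⟨M, M ^ m, by rw [← pow_succ']; exact hm, by rw [← pow_succ]; exact hm⟩

/-- Linear automorphisms of `ℤ^n` as multiplicative automorphisms of the multiplicative
version of `ℤ^n`. -/
def linToAut (n : ℕ) : ((Fin n → ℤ) ≃ₗ[ℤ] (Fin n → ℤ)) →* MulAut (Lat n) :=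
  MonoidHom.mk' (fun e => AddEquiv.toMultiplicative e.toAddEquiv) (fun _ _ => rfl)

/-- An invertible integer matrix acts on the (multiplicative) lattice `ℤ^n` by (left)
matrix-vector multiplication. -/
def glToAut (n : ℕ) : (Matrix (Fin n) (Fin n) ℤ)ˣ →* MulAut (Lat n) :=
  (linToAut n).comp
    ((LinearMap.GeneralLinearGroup.generalLinearEquiv ℤ (Fin n → ℤ)).toMonoidHom.comp
      (Matrix.GeneralLinearGroup.toLin).toMonoidHom)

/-- The homomorphism from `ℤ/m` (written multiplicatively) to a group `G` sending the
generator `1` to a chosen element `α` satisfying `α ^ m = 1`. -/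
def zmodHom {G : Type*} [Group G] (m : ℕ) [NeZero m] (α : G) (hα : α ^ m = 1) :
    Multiplicative (ZMod m) →* G :=
  MonoidHom.mk' (fun g => α ^ (g.toAdd.val)) (by
    intro a b
    show α ^ (ZMod.val (a.toAdd + b.toAdd)) = α ^ (ZMod.val a.toAdd) * α ^ (ZMod.val b.toAdd)
    rw [ZMod.val_add, ← pow_eq_pow_mod _ hα, pow_add])

/-- The action of `ℤ/q` on the lattice `ℤ^n` in which the generator `1` of `ℤ/q` acts by left
multiplication by the integer matrix `M`; `M` is required to satisfy `M ^ q = 1`. -/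
def matAction {n : ℕ} (q : ℕ) [NeZero q] (M : Matrix (Fin n) (Fin n) ℤ)
    (hq : M ^ q = 1) : Multiplicative (ZMod q) →* MulAut (Lat n) :=
  zmodHom q (glToAut n (matUnit M (q - 1) (by
      rwa [Nat.sub_add_cancel (Nat.one_le_iff_ne_zero.2 (NeZero.ne q))])))
    (by
      rw [← map_pow]
      convert map_one (glToAut n)
      ext i j
      rw [Units.val_pow_eq_pow_val]
      simp [matUnit, hq])

/-- The crystallographic group `ℤ^n ⋊ ℤ/q` in which the generator `1` of `ℤ/q` acts on the
lattice `ℤ^n` by left multiplication by the integer matrix `M` (with `M ^ q = 1`). -/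
abbrev Crys {n : ℕ} (q : ℕ) [NeZero q] (M : Matrix (Fin n) (Fin n) ℤ) (hq : M ^ q = 1) : Type :=
  SemidirectProduct (Lat n) (Multiplicative (ZMod q)) (matAction q M hq)


open CategoryTheory groupCohomology

variable {k : Type} [CommRing k]

lemma comp_contractNth {G H : Type*} [Monoid G] [Monoid H] (f : G →* H) {n : ℕ}
    (j : Fin (n + 1)) (g : Fin (n + 1) → G) (i : Fin n) :
    f (Fin.contractNth j (· * ·) g i) = Fin.contractNth j (· * ·) (fun l => f (g l)) i := by
  rcases lt_trichotomy (i : ℕ) j with h | h | h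
  · rw [Fin.contractNth_apply_of_lt _ _ _ _ h, Fin.contractNth_apply_of_lt _ _ _ _ h]
  · rw [Fin.contractNth_apply_of_eq _ _ _ _ h, Fin.contractNth_apply_of_eq _ _ _ _ h,
      _root_.map_mul]
  · rw [Fin.contractNth_apply_of_gt _ _ _ _ h, Fin.contractNth_apply_of_gt _ _ _ _ h]

/-- The map of inhomogeneous cochain complexes induced (contravariantly in the group,
covariantly in the coefficients) by a group homomorphism `f : H →* G` together with a
compatible linear map `τ : A → B` of coefficients. -/
def cochainsMap {G H : Type} [Group G] [Group H] (A : Rep k G) (B : Rep k H)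
    (f : H →* G) (τ : A →ₗ[k] B)
    (hcomp : ∀ (h : H) (a : A), τ (A.ρ (f h) a) = B.ρ h (τ a)) :
    inhomogeneousCochains A ⟶ inhomogeneousCochains B where
  f n := ModuleCat.ofHom
    { toFun := fun F v => τ (F (fun i => f (v i)))
      map_add' := fun x y => by funext v; simp
      map_smul' := fun r x => by funext v; simp }
  comm' i j hij := by
    have hij' : i + 1 = j := hij
    subst hij'
    rw [inhomogeneousCochains.d_def, inhomogeneousCochains.d_def]
    ext F v
    show (inhomogeneousCochains.d B i).hom (fun w => τ (F (fun l => f (w l)))) v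
      = τ ((inhomogeneousCochains.d A i).hom F (fun l => f (v l)))
    simp only [inhomogeneousCochains.d_hom_apply, map_add, map_sum, _root_.map_smul]
    congr 1
    · exact (hcomp (v 0) _).symm
    · refine Finset.sum_congr rfl fun j' _ => ?_
      have hc : (fun l => f (j'.contractNth (· * ·) v l))
          = j'.contractNth (· * ·) (fun l => f (v l)) := by
        funext l
        exact comp_contractNth f j' v l
      rw [hc]

lemma cochainsMap_eq_id {G : Type} [Group G] (A : Rep k G) (f : G →* G) (τ : A →ₗ[k] A)
    (hcomp : ∀ (h : G) (a : A), τ (A.ρ (f h) a) = A.ρ h (τ a))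
    (hf : ∀ x, f x = x) (hτ : ∀ a, τ a = a) :
    cochainsMap A A f τ hcomp = 𝟙 _ := by
  apply HomologicalComplex.Hom.ext
  funext n
  ext F v
  show τ (F (fun i => f (v i))) = F v
  simp only [hf, hτ]

lemma cochainsMap_comp {G H K : Type} [Group G] [Group H] [Group K]
    (A : Rep k G) (B : Rep k H) (C : Rep k K)
    (f₁ : H →* G) (τ₁ : A →ₗ[k] B) (h₁ : ∀ (h : H) (a : A), τ₁ (A.ρ (f₁ h) a) = B.ρ h (τ₁ a))
    (f₂ : K →* H) (τ₂ : B →ₗ[k] C) (h₂ : ∀ (h : K) (a : B), τ₂ (B.ρ (f₂ h) a) = C.ρ h (τ₂ a))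
    (f₃ : K →* G) (τ₃ : A →ₗ[k] C) (h₃ : ∀ (h : K) (a : A), τ₃ (A.ρ (f₃ h) a) = C.ρ h (τ₃ a))
    (hf : ∀ x, f₁ (f₂ x) = f₃ x) (hτ : ∀ a, τ₂ (τ₁ a) = τ₃ a) :
    cochainsMap A B f₁ τ₁ h₁ ≫ cochainsMap B C f₂ τ₂ h₂ = cochainsMap A C f₃ τ₃ h₃ := by
  apply HomologicalComplex.Hom.ext
  funext n
  ext F v
  show τ₂ (τ₁ (F (fun i => f₁ (f₂ (v i))))) = τ₃ (F (fun i => f₃ (v i)))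
  simp only [hf]
  exact hτ _

/-- Given an action `φ` of a group `G` on a group `L` and a representation `ψ` of `G` on a
`k`-module `V`, this is `H^j(L, V)` (with `L` acting trivially on the coefficients `V`),
endowed with the `G`-action functorially induced by the action of `G` on `L` and on `V`:
`g` acts via the conjugation automorphism `φ g⁻¹` of `L` and via `ψ g` on `V`. -/
noncomputable def cohRep {G L V : Type} [Group G] [Group L] [AddCommGroup V] [Module k V]
    (φ : G →* MulAut L) (ψ : Representation k G V) (j : ℕ) : Rep k G :=
  Rep.of (X := groupCohomology (Rep.trivial k L V) j)
    { toFun := fun g => ModuleCat.Hom.hom <| HomologicalComplex.homologyMap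
        (cochainsMap (Rep.trivial k L V) (Rep.trivial k L V) (φ g⁻¹).toMonoidHom (ψ g)
          (fun _ _ => rfl)) j
      map_one' := by
        have h := cochainsMap_eq_id (Rep.trivial k L V) (φ 1⁻¹).toMonoidHom (ψ 1)
          (fun _ _ => rfl) (fun x => by simp) (fun a => by simp)
        exact (congrArg (fun c => ModuleCat.Hom.hom (HomologicalComplex.homologyMap c j)) h).trans
          (congrArg ModuleCat.Hom.hom (HomologicalComplex.homologyMap_id _ j))
      map_mul' := fun g₁ g₂ => by
        have h := cochainsMap_comp (Rep.trivial k L V) (Rep.trivial k L V) (Rep.trivial k L V)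
          (φ g₂⁻¹).toMonoidHom (ψ g₂) (fun _ _ => rfl)
          (φ g₁⁻¹).toMonoidHom (ψ g₁) (fun _ _ => rfl)
          (φ (g₁ * g₂)⁻¹).toMonoidHom (ψ (g₁ * g₂)) (fun _ _ => rfl)
          (fun x => by simp [_root_.mul_inv_rev]) (fun a => by simp)
        rw [← h, HomologicalComplex.homologyMap_comp]
        rfl }


/-- `H^i(G, H^j(L, ℤ))`: the `i`-th cohomology of the cyclic group `ℤ/q` with coefficients in
the `j`-th cohomology of the lattice `ℤ^n` (with trivial `ℤ` coefficients), where the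
`ℤ/q`-action on `H^j(ℤ^n, ℤ)` is the one functorially induced by the matrix action on the
lattice. -/
noncomputable abbrev cohOfCoh {n : ℕ} (q : ℕ) [NeZero q] (M : Matrix (Fin n) (Fin n) ℤ)
    (hq : M ^ q = 1) (i j : ℕ) : ModuleCat ℤ :=
  groupCohomology
    (cohRep (matAction q M hq) (1 : Representation ℤ (Multiplicative (ZMod q)) ℤ) j) i

/-- `H^k(Γ, ℤ)` for `Γ = ℤ^n ⋊ ℤ/q`, with trivial coefficients `ℤ`. -/
noncomputable abbrev cohCrys {n : ℕ} (q : ℕ) [NeZero q] (M : Matrix (Fin n) (Fin n) ℤ)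
    (hq : M ^ q = 1) (k : ℕ) : ModuleCat ℤ :=
  groupCohomology (Rep.trivial ℤ (Crys q M hq) ℤ) k

end Crystal

/-- The holonomy matrix. -/
def holM : Matrix (Fin 5) (Fin 5) ℤ := !![0, 0, 0, 0, -1; 1, 0, 0, 0, -1; 0, 1, 0, 0, 0; 0, 0, 1, 0, 0; 0, 0, 0, 1, -1]

lemma holM_pow : holM ^ 8 = 1 := by decide

/-- `H^k(ℤ^5 ⋊ ℤ/8, ℤ)`, where the generator of `ℤ/8` acts on `ℤ^5` by left
multiplication by the matrix `holM`. -/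
noncomputable abbrev H (k : ℕ) : ModuleCat ℤ := Crystal.cohCrys 8 holM holM_pow k

/-- `H^i(ℤ/8, H^j(ℤ^5, ℤ))`, with the functorially induced action on coefficients. -/
noncomputable abbrev Hc (i j : ℕ) : ModuleCat ℤ := Crystal.cohOfCoh 8 holM holM_pow i j

/-!
In degree `8`, multiplication by `4` distinguishes the two groups.

If `i + j = 8` and `j ≠ 0`, then `4` kills `H^i(ℤ/8, H^j(ℤ^5, ℤ))`. Indeed, on `H^j(ℤ^5, ℤ)`, the
`j`-th exterior power of the dual lattice, `4` is the sum of the transfer of an endomorphism and of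
`(t - 1) ψ` with `ψ` a polynomial in the generator `t`. As `H^8(ℤ/8, ℤ)` is cyclic and killed by
`8`, the multiples of `4` in the direct sum form a group with at most two elements.

In `H^8(Γ, ℤ)` there are at least three multiples of `4`. The group `Γ` acts on the `4`-cube by
signed permutations, the lattice by reflections and `t` by the cyclic rotation of the axes. Splicing
the augmented cellular chain complex of the boundary of the cube with itself gives the square of an
Euler class. It restricts to zero on `⟨t⟩`, which fixes a vertex, and to an odd multiple of a
generator on the cyclic group `⟨e₀ t⟩` of order `8`, which acts freely on the boundary. Letting `Γ`
act through `Γ → ℤ/8` by the image of `e₀ t` gives a second class, nonzero on `⟨t⟩`. Both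
restrictions are computed by evaluating cocycles on the periodic resolution of `ℤ/8`.
-/

namespace Crystal

open CategoryTheory groupCohomology

section Cochains

variable {R G A B : Type} [CommRing R] [Group G] [AddCommGroup A] [Module R A]
  [AddCommGroup B] [Module R B]

/-- The differential of the inhomogeneous cochain complex of `ρ`, as a linear map between function
spaces. -/
noncomputable def cochainD (ρ : Representation R G A) (n : ℕ) :
    ((Fin n → G) → A) →ₗ[R] ((Fin (n + 1) → G) → A) :=
  (inhomogeneousCochains.d (Rep.of ρ) n).hom

lemma cochainD_apply (ρ : Representation R G A) (n : ℕ) (F : (Fin n → G) → A)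
    (g : Fin (n + 1) → G) :
    cochainD ρ n F g = ρ (g 0) (F fun i => g i.succ) +
      ∑ j : Fin (n + 1), (-1 : R) ^ ((j : ℕ) + 1) • F (Fin.contractNth j (· * ·) g) :=
  inhomogeneousCochains.d_hom_apply (Rep.of ρ) n F g

lemma cochainD_cochainD (ρ : Representation R G A) (n : ℕ) (F : (Fin n → G) → A) :
    cochainD ρ (n + 1) (cochainD ρ n F) = 0 :=
  congrArg (fun f => f.hom F) (inhomogeneousCochains.d_comp_d n (Rep.of ρ))

lemma cochainD_compLeft (ρ : Representation R G A) (σ : Representation R G B) (f : A →ₗ[R] B)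
    (hf : ∀ g a, f (ρ g a) = σ g (f a)) (n : ℕ) (F : (Fin n → G) → A) :
    cochainD σ n (f.compLeft _ F) = f.compLeft _ (cochainD ρ n F) := by
  funext v
  simp [cochainD_apply, hf]

lemma cochainD_iCocycles (ρ : Representation R G A) (n : ℕ) (z : cocycles (Rep.of ρ) n) :
    cochainD ρ n (iCocycles (Rep.of ρ) n z) = 0 := by
  have h := (inhomogeneousCochains (Rep.of ρ)).iCycles_d n (n + 1)
  rw [inhomogeneousCochains.d_def] at h
  exact congrArg (fun f => f.hom z) h

lemma iCocycles_toCocycles (ρ : Representation R G A) (n : ℕ) (K : (Fin n → G) → A) :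
    iCocycles (Rep.of ρ) (n + 1) (toCocycles (Rep.of ρ) n (n + 1) K) = cochainD ρ n K := by
  have h := (inhomogeneousCochains (Rep.of ρ)).toCycles_i n (n + 1)
  rw [inhomogeneousCochains.d_def] at h
  exact congrArg (fun f => f.hom K) h

/-- The cocycles of Mathlib, which are a categorical kernel, are the kernel of `cochainD`. -/
noncomputable def cocyclesEquivKer (ρ : Representation R G A) (n : ℕ) :
    cocycles (Rep.of ρ) n ≃ₗ[R] LinearMap.ker (cochainD ρ n) :=
  LinearEquiv.ofBijective
    ((iCocycles (Rep.of ρ) n).hom.codRestrict _ (cochainD_iCocycles ρ n))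
    ⟨fun _ _ h => (ModuleCat.mono_iff_injective (iCocycles (Rep.of ρ) n)).1 inferInstance
        (congrArg Subtype.val h),
      fun F => ⟨cocyclesMk (A := Rep.of ρ) F.1 F.2, Subtype.ext (iCocycles_mk (A := Rep.of ρ) _ _)⟩⟩

/-- The cohomology class of an inhomogeneous cocycle. -/
noncomputable def cohClass (ρ : Representation R G A) (n : ℕ) :
    LinearMap.ker (cochainD ρ n) →ₗ[R] groupCohomology (Rep.of ρ) n :=
  (π (Rep.of ρ) n).hom ∘ₗ (cocyclesEquivKer ρ n).symm

lemma π_surjective (A : Rep.{0} R G) (n : ℕ) : Function.Surjective (π A n) :=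
  fun x => groupCohomology_induction_on x fun z => ⟨z, rfl⟩

lemma cohClass_surjective (ρ : Representation R G A) (n : ℕ) :
    Function.Surjective (cohClass ρ n) :=
  (π_surjective (Rep.of ρ) n).comp (cocyclesEquivKer ρ n).symm.surjective

lemma cohClass_eq_zero_iff (ρ : Representation R G A) (n : ℕ)
    (F : LinearMap.ker (cochainD ρ (n + 1))) :
    cohClass ρ (n + 1) F = 0 ↔ ∃ K, cochainD ρ n K = F := by
  have exact_at_cocycles : (ShortComplex.mk (toCocycles (Rep.of ρ) n (n + 1))
      (π (Rep.of ρ) (n + 1))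
      ((inhomogeneousCochains (Rep.of ρ)).toCycles_comp_homologyπ n (n + 1))).Exact :=
    ShortComplex.exact_of_g_is_cokernel _
      ((inhomogeneousCochains (Rep.of ρ)).homologyIsCokernel n (n + 1) (by simp))
  calc cohClass ρ (n + 1) F = 0
      ↔ ∃ K, toCocycles (Rep.of ρ) n (n + 1) K = (cocyclesEquivKer ρ (n + 1)).symm F :=
        (ShortComplex.ShortExact.moduleCat_exact_iff_function_exact _).1 exact_at_cocycles _
    _ ↔ ∃ K, cochainD ρ n K = F := by
        refine exists_congr fun K => ?_
        rw [LinearEquiv.eq_symm_apply, Subtype.ext_iff, ← iCocycles_toCocycles]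
        rfl

end Cochains

section PeriodicEvaluation

variable {R G A B : Type} [CommRing R] [Group G] [AddCommGroup A] [Module R A]
  [AddCommGroup B] [Module R B]

variable (R) in
/-- Fixing the first argument of a cochain. -/
def slice {n : ℕ} (g : G) : ((Fin (n + 1) → G) → A) →ₗ[R] ((Fin n → G) → A) :=
  LinearMap.funLeft R A fun v => Fin.cons g v

/-- The differential, in degree `n`, of the `2`-periodic complex that computes the cohomology of a
cyclic group of order `q` whose generator acts by `T`. -/
def periodicD (q : ℕ) (T : Module.End R A) (n : ℕ) : Module.End R A :=
  if Even n then T - 1 else ∑ a ∈ Finset.range q, T ^ a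

variable (R A) in
/-- Evaluation of cochains on the image of the periodic resolution of the cyclic group generated by
`τ`, of order dividing `q`, in the bar resolution. -/
def periodicEval (q : ℕ) (τ : G) : (n : ℕ) → ((Fin n → G) → A) →ₗ[R] A
  | 0 => LinearMap.proj Fin.elim0
  | n + 1 =>
    if Even n then periodicEval q τ n ∘ₗ slice R τ
    else ∑ a ∈ Finset.range q, periodicEval q τ n ∘ₗ slice R (τ ^ a)

lemma periodicEval_succ_of_even (q : ℕ) (τ : G) {n : ℕ} (hn : Even n)
    (F : (Fin (n + 1) → G) → A) :
    periodicEval R A q τ (n + 1) F = periodicEval R A q τ n (slice R τ F) := by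
  simp only [periodicEval, if_pos hn, LinearMap.comp_apply]

lemma periodicEval_succ_of_not_even (q : ℕ) (τ : G) {n : ℕ} (hn : ¬ Even n)
    (F : (Fin (n + 1) → G) → A) :
    periodicEval R A q τ (n + 1) F =
      ∑ a ∈ Finset.range q, periodicEval R A q τ n (slice R (τ ^ a) F) := by
  simp only [periodicEval, if_neg hn, LinearMap.sum_apply, LinearMap.comp_apply]

lemma periodicEval_compLeft (q : ℕ) (τ : G) (f : A →ₗ[R] B) (n : ℕ) (F : (Fin n → G) → A) :
    periodicEval R B q τ n (f.compLeft _ F) = f (periodicEval R A q τ n F) := by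
  induction n with
  | zero => rfl
  | succ n ih =>
    by_cases hn : Even n
    · rw [periodicEval_succ_of_even q τ hn, periodicEval_succ_of_even q τ hn]
      exact ih (slice R τ F)
    · simp only [periodicEval_succ_of_not_even q τ hn, map_sum]
      exact Finset.sum_congr rfl fun a _ => ih (slice R (τ ^ a) F)

lemma contractNth_zero_cons {n : ℕ} (g : G) (v : Fin (n + 1) → G) :
    Fin.contractNth (0 : Fin (n + 2)) (· * ·) (Fin.cons g v : Fin (n + 2) → G)
      = Fin.cons (g * v 0) (fun i => v i.succ) := by
  funext i
  refine Fin.cases ?_ (fun i => ?_) i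
  · simp [Fin.contractNth]
  · simp [Fin.contractNth]

lemma contractNth_succ_cons {n : ℕ} (g : G) (v : Fin (n + 1) → G) (j : Fin (n + 1)) :
    Fin.contractNth j.succ (· * ·) (Fin.cons g v : Fin (n + 2) → G)
      = Fin.cons g (Fin.contractNth j (· * ·) v) := by
  funext i
  refine Fin.cases ?_ (fun i => ?_) i
  · simp [Fin.contractNth]
  · simp only [Fin.contractNth, Fin.val_succ, Fin.cons_succ, ← Fin.succ_castSucc,
      Nat.add_lt_add_iff_right, Nat.add_right_cancel_iff]

/-- The part of `slice g (cochainD ρ (n + 1) F)` that involves multiplying `g` by, or acting with,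
the next argument. -/
def sliceDefect (ρ : Representation R G A) {n : ℕ} (g : G) (F : (Fin (n + 1) → G) → A) :
    (Fin (n + 1) → G) → A :=
  fun v => ρ (v 0) (F (Fin.cons g (Fin.tail v))) - F (Fin.cons (g * v 0) (Fin.tail v))

lemma slice_cochainD (ρ : Representation R G A) {n : ℕ} (g : G) (F : (Fin (n + 1) → G) → A) :
    slice R g (cochainD ρ (n + 1) F) =
      (ρ g).compLeft _ F - cochainD ρ n (slice R g F) + sliceDefect ρ g F := by
  funext v
  simp only [slice, sliceDefect, LinearMap.funLeft_apply, cochainD_apply, Pi.add_apply,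
    Pi.sub_apply, LinearMap.compLeft_apply, Function.comp_apply]
  rw [Fin.sum_univ_succ]
  simp only [contractNth_zero_cons, contractNth_succ_cons, Fin.cons_zero, Fin.cons_succ,
    Fin.val_succ, pow_succ (-1 : R) (_ + 1), mul_neg, mul_one, neg_smul, Finset.sum_neg_distrib,
    Fin.val_zero, zero_add, pow_one, one_smul, Fin.tail_def]
  abel

lemma slice_sliceDefect (ρ : Representation R G A) {n : ℕ} (g h : G)
    (F : (Fin (n + 1) → G) → A) :
    slice R h (sliceDefect ρ g F) =
      (ρ h).compLeft _ (slice R g F) - slice R (g * h) F := by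
  funext v
  simp [slice, sliceDefect, LinearMap.funLeft_apply]

lemma sum_range_pow_succ {q : ℕ} {τ : G} (hτ : τ ^ q = 1) (f : G → A) :
    ∑ a ∈ Finset.range q, f (τ ^ (a + 1)) = ∑ a ∈ Finset.range q, f (τ ^ a) := by
  rw [← add_left_inj (f (τ ^ 0)), ← Finset.sum_range_succ' (fun a => f (τ ^ a)),
    Finset.sum_range_succ, hτ, pow_zero]

lemma periodicEval_cochainD (ρ : Representation R G A) {q : ℕ} {τ : G} (hτ : τ ^ q = 1) (n : ℕ)
    (F : (Fin n → G) → A) :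
    periodicEval R A q τ (n + 1) (cochainD ρ n F) =
      periodicD q (ρ τ) n (periodicEval R A q τ n F) := by
  induction n with
  | zero =>
    simp [periodicEval, periodicD, slice, cochainD_apply, LinearMap.funLeft_apply,
      sub_eq_add_neg, Subsingleton.elim _ (Fin.elim0 : Fin 0 → G)]
  | succ n ih =>
    by_cases hn : Even n
    · have hn' : ¬ Even (n + 1) := by simpa [Nat.even_add_one] using hn
      have eval_defect : ∀ a, periodicEval R A q τ (n + 1) (sliceDefect ρ (τ ^ a) F) =
          ρ τ (periodicEval R A q τ n (slice R (τ ^ a) F)) -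
            periodicEval R A q τ n (slice R (τ ^ (a + 1)) F) := fun a => by
        rw [periodicEval_succ_of_even q τ hn, slice_sliceDefect, map_sub, periodicEval_compLeft,
          pow_succ]
      simp only [periodicEval_succ_of_not_even q τ hn', slice_cochainD, map_add, map_sub, ih,
        periodicEval_compLeft, eval_defect, Finset.sum_add_distrib, Finset.sum_sub_distrib,
        sum_range_pow_succ hτ fun x => periodicEval R A q τ n (slice R x F)]
      simp [periodicD, if_neg hn', if_pos hn]
    · have hn' : Even (n + 1) := by simpa [Nat.even_add_one] using hn
      have eval_defect : periodicEval R A q τ (n + 1) (sliceDefect ρ τ F) =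
          (∑ a ∈ Finset.range q, ρ τ ^ a) (periodicEval R A q τ n (slice R τ F)) -
            periodicEval R A q τ (n + 1) F := by
        simp only [periodicEval_succ_of_not_even q τ hn, slice_sliceDefect, map_sub,
          periodicEval_compLeft, ← pow_succ', Finset.sum_sub_distrib, map_pow,
          sum_range_pow_succ hτ fun x => periodicEval R A q τ n (slice R x F),
          LinearMap.sum_apply]
      simp only [periodicEval_succ_of_even q τ hn', slice_cochainD, map_add, map_sub, ih,
        periodicEval_compLeft, eval_defect]
      simp [periodicD, if_neg hn, if_pos hn']

end PeriodicEvaluation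

section PeriodicDifferential

variable {R A B : Type} [CommRing R] [AddCommGroup A] [Module R A] [AddCommGroup B] [Module R B]

lemma map_periodicD {T : Module.End R A} {T' : Module.End R B} {f : A →ₗ[R] B}
    (hf : ∀ x, f (T x) = T' (f x)) (q n : ℕ) (x : A) :
    f (periodicD q T n x) = periodicD q T' n (f x) := by
  have hf_pow : ∀ a x, f ((T ^ a) x) = (T' ^ a) (f x) := fun a => by
    induction a with
    | zero => simp
    | succ a ih => simp [pow_succ, ih, hf]
  unfold periodicD
  split_ifs <;> simp [hf, hf_pow]

lemma periodicD_succ_periodicD {T : Module.End R A} {q : ℕ} (hT : T ^ q = 1) (n : ℕ) (x : A) :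
    periodicD q T (n + 1) (periodicD q T n x) = 0 := by
  rw [← Module.End.mul_apply]
  by_cases hn : Even n
  · simp [periodicD, hn, Nat.even_add_one, geom_sum_mul, hT]
  · simp [periodicD, hn, Nat.even_add_one, mul_geom_sum, hT]

lemma periodicD_add_of_even (q : ℕ) (T : Module.End R A) {m : ℕ} (hm : Even m) (n : ℕ) :
    periodicD q T (m + n) = periodicD q T n := by
  simp [periodicD, Nat.even_add, hm]

/-- A staircase of length `n` over `x` in the double complex with differentials `bd` and `D`: each
term `e (k + 1)` bounds the image of `e k`, and `e 0` bounds `x`. -/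
structure IsStaircase (bd : Module.End R A) (D : ℕ → Module.End R A) (x : A) (n : ℕ)
    (e : ℕ → A) : Prop where
  bd_zero : bd (e 0) = x
  bd_succ : ∀ k < n, bd (e (k + 1)) = D k (e k)

lemma IsStaircase.exists_eq_add {bd : Module.End R A} {D : ℕ → Module.End R A} {x : A} {n : ℕ}
    {e e' : ℕ → A} (he : IsStaircase bd D x (n + 1) e) (he' : IsStaircase bd D x (n + 1) e')
    (exact_bd : Function.Exact bd bd) (bd_D : ∀ k y, bd (D k y) = D k (bd y))
    (D_D : ∀ k y, D (k + 1) (D k y) = 0) :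
    ∃ w w', e' (n + 1) = e (n + 1) + (bd w + D n w') := by
  have step : ∀ k ≤ n, ∀ w u, D k u = 0 → e' k = e k + (bd w + u) →
      ∃ w₁, e' (k + 1) = e (k + 1) + (bd w₁ + D k w) := by
    intro k hk w u hu hw
    obtain ⟨w₁, hw₁⟩ := (exact_bd (e' (k + 1) - e (k + 1) - D k w)).1 <| by
      rw [map_sub, map_sub, he'.bd_succ k (by lia), he.bd_succ k (by lia), hw, bd_D, map_add,
        map_add, hu]
      abel
    exact ⟨w₁, by rw [hw₁]; abel⟩
  have difference : ∀ k ≤ n, ∃ w u, D k u = 0 ∧ e' k = e k + (bd w + u) := by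
    intro k
    induction k with
    | zero =>
      intro _
      obtain ⟨w, hw⟩ := (exact_bd (e' 0 - e 0)).1 <| by
        rw [map_sub, he.bd_zero, he'.bd_zero, sub_self]
      exact ⟨w, 0, map_zero _, by rw [hw]; abel⟩
    | succ k ih =>
      intro hk
      obtain ⟨w, u, hu, hw⟩ := ih (by lia)
      obtain ⟨w₁, hw₁⟩ := step k (by lia) w u hu hw
      exact ⟨w₁, D k w, D_D k w, hw₁⟩
  obtain ⟨w, u, hu, hw⟩ := difference n le_rfl
  obtain ⟨w₁, hw₁⟩ := step n le_rfl w u hu hw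
  exact ⟨w₁, w, hw₁⟩

end PeriodicDifferential

/-- An exact complex `0 → R → E_{n-1} → ⋯ → E_0 → R → 0`, encoded by the endomorphism `bd` of the
direct sum `E` of its terms, the inclusion `bot` of the right-hand copy of `R` and the projection
`top` to the left-hand one. -/
structure Splice (R E : Type) [CommRing R] [AddCommGroup E] [Module R E] where
  bd : Module.End R E
  bot : R →ₗ[R] E
  top : E →ₗ[R] R
  exact_bd : Function.Exact bd bd
  bd_bot : ∀ r, bd (bot r) = 0
  top_bd : ∀ x, top (bd x) = 0

namespace Splice

variable {R G E : Type} [CommRing R] [Group G] [AddCommGroup E] [Module R E]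

/-- The group `G` acts on the whole complex by `ρ`, on its right-hand end by `β` and on its
left-hand end by `α`. -/
structure IsEquivariant (S : Splice R E) (ρ : Representation R G E) (β α : Representation R G R) :
    Prop where
  bd_map : ∀ g x, S.bd (ρ g x) = ρ g (S.bd x)
  bot_map : ∀ g r, S.bot (β g r) = ρ g (S.bot r)
  top_map : ∀ g x, S.top (ρ g x) = α g (S.top x)

variable {S : Splice R E} {ρ : Representation R G E} {β α : Representation R G R}

lemma exists_bd_comp_eq (S : Splice R E) {X : Type} (F : X → E) (hF : ∀ v, S.bd (F v) = 0) :
    ∃ y : X → E, S.bd.compLeft X y = F := by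
  choose y hy using fun v => (S.exact_bd (F v)).1 (hF v)
  exact ⟨y, funext hy⟩

lemma IsEquivariant.exists_cochain_staircase (h : S.IsEquivariant ρ β α) {m : ℕ}
    {F : (Fin m → G) → R} (hF : cochainD β m F = 0) :
    ∃ y : (k : ℕ) → (Fin (m + k) → G) → E, S.bd.compLeft _ (y 0) = S.bot.compLeft _ F ∧
      ∀ k, S.bd.compLeft _ (y (k + 1)) = cochainD ρ (m + k) (y k) := by
  obtain ⟨y₀, hy₀⟩ := S.exists_bd_comp_eq (S.bot.compLeft _ F) fun v => S.bd_bot _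
  have next : ∀ {n : ℕ} (y : (Fin n → G) → E), cochainD ρ n (S.bd.compLeft _ y) = 0 →
      ∃ z : (Fin (n + 1) → G) → E, S.bd.compLeft _ z = cochainD ρ n y ∧
        cochainD ρ (n + 1) (S.bd.compLeft _ z) = 0 := fun {n} y hy => by
    obtain ⟨z, hz⟩ := S.exists_bd_comp_eq (cochainD ρ n y) fun v => by
      rw [cochainD_compLeft ρ ρ S.bd h.bd_map] at hy
      exact congrFun hy v
    exact ⟨z, hz, by rw [hz, cochainD_cochainD]⟩
  choose! z hz hz' using fun n => next (n := n)
  have hy₀' : cochainD ρ m (S.bd.compLeft _ y₀) = 0 := by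
    rw [hy₀, cochainD_compLeft β ρ S.bot h.bot_map, hF]
    funext v
    simp
  let y : (k : ℕ) → (Fin (m + k) → G) → E := fun k => Nat.rec y₀ (fun k y => z (m + k) y) k
  have hy : ∀ k, cochainD ρ (m + k) (S.bd.compLeft _ (y k)) = 0 := fun k => by
    induction k with
    | zero => exact hy₀'
    | succ k ih => exact hz' _ _ ih
  exact ⟨y, hy₀, fun k => hz _ _ (hy k)⟩

/-- The Yoneda product of the class of `F` with the class of the complex, together with the recipe
for evaluating it on the periodic resolution of a finite cyclic subgroup. -/
theorem IsEquivariant.exists_cocycle (h : S.IsEquivariant ρ β α) {m : ℕ}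
    {F : (Fin m → G) → R} (hF : cochainD β m F = 0) {n d : ℕ} (hd : m + (n + 1) = d) :
    ∃ F' : (Fin d → G) → R, cochainD α d F' = 0 ∧
      ∀ (q : ℕ) (τ : G), τ ^ q = 1 → ∀ e, IsStaircase S.bd (fun k => periodicD q (ρ τ) (m + k))
        (S.bot (periodicEval R R q τ m F)) (n + 1) e →
        ∃ w, periodicEval R R q τ d F' = S.top (e (n + 1)) + periodicD q (α τ) (m + n) w := by
  subst hd
  obtain ⟨y, hy₀, hy⟩ := h.exists_cochain_staircase hF
  refine ⟨S.top.compLeft _ (y (n + 1)), ?_, fun q τ hτ e he => ?_⟩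
  · rw [cochainD_compLeft ρ α S.top h.top_map, ← hy]
    funext v
    simp [S.top_bd]
  · have hTq : ρ τ ^ q = 1 := by rw [← map_pow, hτ, map_one]
    have eval_staircase : IsStaircase S.bd (fun k => periodicD q (ρ τ) (m + k))
        (S.bot (periodicEval R R q τ m F)) (n + 1) fun k => periodicEval R E q τ (m + k) (y k) :=
      ⟨by rw [← periodicEval_compLeft, ← periodicEval_compLeft, ← hy₀]; rfl, fun k _ => by
        rw [← periodicEval_compLeft, hy, ← periodicEval_cochainD ρ hτ]; rfl⟩
    obtain ⟨w, w', hw⟩ := he.exists_eq_add eval_staircase S.exact_bd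
      (fun k => map_periodicD (h.bd_map τ) q (m + k))
      fun k => periodicD_succ_periodicD hTq (m + k)
    refine ⟨S.top w', ?_⟩
    rw [periodicEval_compLeft, hw, map_add, map_add, S.top_bd, zero_add,
      map_periodicD (h.top_map τ)]

end Splice

section Twist

variable {R G E : Type} [CommRing R] [Group G] [AddCommGroup E] [Module R E]

/-- The tensor product of a representation with a character. -/
def twist (χ : G →* Rˣ) (ρ : Representation R G E) : Representation R G E where
  toFun g := (χ g : R) • ρ g
  map_one' := by simp
  map_mul' g h := by simp [smul_smul, mul_comm]

lemma twist_apply (χ : G →* Rˣ) (ρ : Representation R G E) (g : G) (x : E) :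
    twist χ ρ g x = (χ g : R) • ρ g x := rfl

lemma twist_of_eq_one {χ : G →* Rˣ} {τ : G} (hχ : χ τ = 1) (ρ : Representation R G E) :
    twist χ ρ τ = ρ τ := by
  ext x
  simp [twist_apply, hχ]

lemma twist_twist_one (χ : G →* ℤˣ) : twist χ (twist χ (1 : Representation ℤ G ℤ)) = 1 := by
  ext g
  simp [twist_apply, ← Units.val_mul, Int.units_mul_self]

lemma Splice.IsEquivariant.twist {S : Splice R E} {ρ : Representation R G E}
    {β α : Representation R G R} (h : S.IsEquivariant ρ β α) (χ : G →* Rˣ) :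
    S.IsEquivariant (twist χ ρ) (twist χ β) (twist χ α) where
  bd_map g x := by simp [twist_apply, h.bd_map]
  bot_map g r := by simp only [twist_apply, map_smul, h.bot_map]
  top_map g x := by simp [twist_apply, h.top_map]

end Twist

section Staircase

variable {R A : Type} [CommRing R] [AddCommGroup A] [Module R A]

lemma periodicD_one_of_odd (q : ℕ) {n : ℕ} (hn : Odd n) (x : A) :
    periodicD q (1 : Module.End R A) n x = q • x := by
  simp [periodicD, Nat.not_even_iff_odd.2 hn]

variable {bd : Module.End R A} {D : ℕ → Module.End R A} {x : A} {n : ℕ}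

lemma IsStaircase.smul {e : ℕ → A} (he : IsStaircase bd D x n e) (c : R) :
    IsStaircase bd D (c • x) n fun k => c • e k :=
  ⟨by rw [map_smul, he.bd_zero], fun k hk => by rw [map_smul, he.bd_succ k hk, map_smul]⟩

lemma isStaircase_single {e₀ : A} (hbd : bd e₀ = x) (hD : D 0 e₀ = 0) :
    IsStaircase bd D x n (Pi.single 0 e₀) :=
  ⟨by simpa using hbd, fun k _ => by cases k <;> simp [hD]⟩

end Staircase

namespace Splice

variable {G E : Type} [Group G] [AddCommGroup E] {S : Splice ℤ E}
  {ρ : Representation ℤ G E} {χ : G →* ℤˣ}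

lemma isStaircase_of_fixed {e₀ : E} (he₀ : S.bd e₀ = S.bot 1) {τ : G} (hfix : ρ τ e₀ = e₀)
    {q m : ℕ} {c : ℤ} (hc : periodicD q (twist χ (1 : Representation ℤ G ℤ) τ) m c = 0) (n : ℕ) :
    IsStaircase S.bd (fun k => periodicD q (twist χ ρ τ) (m + k)) (S.bot c) n
      (Pi.single 0 (c • e₀)) := by
  refine isStaircase_single (by rw [map_smul, he₀, ← map_smul, smul_eq_mul, mul_one]) ?_
  have hmap := map_periodicD (f := LinearMap.toSpanSingleton ℤ E e₀)
    (T := twist χ (1 : Representation ℤ G ℤ) τ) (T' := twist χ ρ τ)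
    (fun r => by simp [twist_apply, mul_smul, hfix, smul_comm r]) q m c
  simpa [hc] using hmap.symm

/-- The square of the twisted Euler class of the complex. -/
theorem IsEquivariant.exists_square (h : S.IsEquivariant ρ 1 (Crystal.twist χ 1)) {n m d : ℕ}
    (hn : Odd n) (hm : n + 1 = m) (hd : m + m = d) :
    ∃ F : (Fin d → G) → ℤ, cochainD (1 : Representation ℤ G ℤ) d F = 0 ∧
      ∀ (q : ℕ) (τ : G), τ ^ q = 1 →
        (∀ e₀, S.bd e₀ = S.bot 1 → ρ τ e₀ = e₀ → (q : ℤ) ∣ periodicEval ℤ ℤ q τ d F) ∧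
        (∀ e, χ τ = 1 → IsStaircase S.bd (periodicD q (ρ τ)) (S.bot 1) m e →
          (q : ℤ) ∣ periodicEval ℤ ℤ q τ d F - S.top (e m) ^ 2) := by
  subst hm hd
  have hone : cochainD (1 : Representation ℤ G ℤ) 0 (fun _ => 1) = 0 := by
    ext v
    simp
  obtain ⟨F₁, hF₁, eval_F₁⟩ := h.exists_cocycle hone (zero_add (n + 1))
  have h' := h.twist χ
  rw [twist_twist_one] at h'
  obtain ⟨F, hF, eval_F⟩ := h'.exists_cocycle hF₁ (n := n) rfl
  refine ⟨F, hF, fun q τ hτ => ⟨fun e₀ he₀ hfix => ?_, fun e hχ he => ?_⟩⟩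
  · obtain ⟨w, hw⟩ := eval_F q τ hτ _ <| isStaircase_of_fixed he₀ hfix
      (by rw [← periodicEval_cochainD _ hτ, hF₁, map_zero]) _
    rw [hw, MonoidHom.one_apply, periodicD_one_of_odd q (hn.add_one.add_odd hn)]
    simp
  · obtain ⟨w₁, hw₁⟩ := eval_F₁ q τ hτ e (by simpa [periodicEval] using he)
    have he' := he.smul (periodicEval ℤ ℤ q τ (n + 1) F₁)
    obtain ⟨w, hw⟩ := eval_F q τ hτ _ <| by
      rw [twist_of_eq_one hχ]
      simpa only [periodicD_add_of_even q _ hn.add_one, ← map_smul, smul_eq_mul, mul_one] using he'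
    rw [twist_of_eq_one hχ, MonoidHom.one_apply, zero_add, periodicD_one_of_odd q hn] at hw₁
    rw [MonoidHom.one_apply, periodicD_one_of_odd q (hn.add_one.add_odd hn), map_smul, hw₁] at hw
    refine ⟨w₁ * S.top (e (n + 1)) + w, ?_⟩
    simp only [hw, nsmul_eq_mul, smul_eq_mul]
    ring

end Splice

namespace Splice

variable {R E : Type} [CommRing R] [AddCommGroup E] [Module R E]

/-- The automorphisms of the complex that are the identity on its right-hand end, together with
the scalar by which they act on its left-hand end. -/
def Aut (S : Splice R E) : Subgroup ((E ≃ₗ[R] E) × Rˣ) where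
  carrier := {u | (∀ x, S.bd (u.1 x) = u.1 (S.bd x)) ∧ (∀ r, u.1 (S.bot r) = S.bot r) ∧
    ∀ x, S.top (u.1 x) = u.2 * S.top x}
  mul_mem' := by
    rintro u v ⟨hu_bd, hu_bot, hu_top⟩ ⟨hv_bd, hv_bot, hv_top⟩
    exact ⟨by simp [hu_bd, hv_bd], by simp [hu_bot, hv_bot], by simp [hu_top, hv_top, mul_assoc]⟩
  one_mem' := by simp
  inv_mem' := by
    rintro u ⟨hu_bd, hu_bot, hu_top⟩
    refine ⟨fun x => ?_, fun r => ?_, fun x => ?_⟩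
    · exact (u.1.symm_apply_eq.2 (by rw [← hu_bd]; simp)).symm
    · exact u.1.symm_apply_eq.2 (hu_bot r).symm
    · obtain ⟨y, rfl⟩ := u.1.surjective x
      simp [hu_top]

variable {S : Splice R E} {G : Type} [Group G]

/-- The representation underlying an action of `G` on the complex. -/
def Aut.rep (Φ : G →* S.Aut) : Representation R G E :=
  LinearEquiv.automorphismGroup.toLinearMapMonoidHom.comp
    ((MonoidHom.fst _ _).comp (S.Aut.subtype.comp Φ))

/-- The character by which `G` acts on the left-hand end of the complex. -/
def Aut.char (Φ : G →* S.Aut) : G →* Rˣ :=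
  (MonoidHom.snd _ _).comp (S.Aut.subtype.comp Φ)

lemma Aut.isEquivariant (Φ : G →* S.Aut) :
    S.IsEquivariant (Aut.rep Φ) 1 (twist (Aut.char Φ) 1) where
  bd_map g := (Φ g).2.1
  bot_map g r := ((Φ g).2.2.1 r).symm
  top_map g := (Φ g).2.2.2

end Splice

/-- An acyclic augmented chain complex of abelian groups, encoded by the endomorphism `bd` of the
direct sum `C` of its terms, with a chosen `0`-cycle `vertex` of augmentation one. -/
structure AugComplex (C : Type) [AddCommGroup C] where
  bd : Module.End ℤ C
  aug : C →ₗ[ℤ] ℤ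
  vertex : C
  bd_bd : ∀ x, bd (bd x) = 0
  aug_bd : ∀ x, aug (bd x) = 0
  exists_bd_eq : ∀ x, bd x = 0 → aug x = 0 → ∃ y, bd y = x
  bd_vertex : bd vertex = 0
  aug_vertex : aug vertex = 1

/-- The sign `(-1) ^ dim a` of a cell of the interval, where the cells `0` and `1` are the end
points and the cell `2` is the edge. -/
def cellSign : Fin 3 → ℤ := ![1, 1, -1]

/-- The coefficient of a cell of the interval in the boundary of the edge. -/
def incidence : Fin 3 → ℤ := ![-1, 1, 0]

namespace AugComplex

variable {C : Type} [AddCommGroup C]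

/-- The cellular chain complex of a point. -/
def point : AugComplex ℤ where
  bd := 0
  aug := LinearMap.id
  vertex := 1
  bd_bd _ := rfl
  aug_bd _ := rfl
  exists_bd_eq _ _ hx := ⟨0, hx.symm⟩
  bd_vertex := rfl
  aug_vertex := rfl

/-- The boundary of the tensor product of the cellular chain complex of the interval with a complex
with boundary `b`. -/
def intervalBd (b : Module.End ℤ C) : Module.End ℤ (Fin 3 → C) where
  toFun x a := cellSign a • b (x a) + incidence a • x 2
  map_add' x y := by
    funext a
    simp only [Pi.add_apply, map_add, smul_add]
    abel
  map_smul' r x := by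
    funext a
    simp [smul_comm r]

lemma intervalBd_apply (b : Module.End ℤ C) (x : Fin 3 → C) (a : Fin 3) :
    intervalBd b x a = cellSign a • b (x a) + incidence a • x 2 := rfl

lemma intervalBd_eq_iff {b : Module.End ℤ C} {x y : Fin 3 → C} :
    intervalBd b x = y ↔ b (x 0) - x 2 = y 0 ∧ b (x 1) + x 2 = y 1 ∧ -b (x 2) = y 2 := by
  simp [funext_iff, Fin.forall_fin_succ, intervalBd_apply, cellSign, incidence, sub_eq_add_neg]

/-- The tensor product of the cellular chain complex of the interval with a complex. -/
def interval (A : AugComplex C) : AugComplex (Fin 3 → C) where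
  bd := intervalBd A.bd
  aug := A.aug ∘ₗ LinearMap.proj 0 + A.aug ∘ₗ LinearMap.proj 1
  vertex := ![0, A.vertex, 0]
  bd_bd x := by simp [intervalBd_eq_iff, intervalBd_apply, cellSign, incidence, A.bd_bd]
  aug_bd x := by simp [intervalBd_apply, cellSign, incidence, A.aug_bd]
  exists_bd_eq x hx haug := by
    obtain ⟨h₀, h₁, -⟩ := intervalBd_eq_iff.1 hx
    obtain ⟨z, hz⟩ := A.exists_bd_eq (x 0 + x 1)
      (by rw [map_add, sub_eq_zero.1 h₀, eq_neg_of_add_eq_zero_left h₁]; simp)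
      (by rw [map_add]; exact haug)
    exact ⟨![0, z, -x 0], intervalBd_eq_iff.2 (by simpa [hz] using sub_eq_zero.1 h₀)⟩
  bd_vertex := by simp [intervalBd_eq_iff, A.bd_vertex]
  aug_vertex := by simp [A.aug_vertex]

variable (A : AugComplex C) (top : C →ₗ[ℤ] ℤ)

/-- The augmented complex, with `top` the projection to its left-hand end. -/
def toSplice (top_bd : ∀ x, top (A.bd x) = 0) : Splice ℤ (C × ℤ) where
  bd := (A.bd ∘ₗ LinearMap.fst ℤ C ℤ).prod (A.aug ∘ₗ LinearMap.fst ℤ C ℤ)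
  bot := LinearMap.inr ℤ C ℤ
  top := top ∘ₗ LinearMap.fst ℤ C ℤ
  exact_bd := by
    rintro ⟨x, r⟩
    constructor
    · intro hx
      obtain ⟨hbd, haug⟩ := Prod.mk_eq_zero.1 hx
      obtain ⟨y, rfl⟩ := A.exists_bd_eq x hbd haug
      exact ⟨(y + (r - A.aug y) • A.vertex, 0), by simp [A.bd_vertex, A.aug_vertex]⟩
    · rintro ⟨y, hy⟩
      rw [← hy]
      simp [A.bd_bd, A.aug_bd]
  bd_bot _ := by simp
  top_bd x := top_bd x.1

variable {A top} in
/-- The extension of a symmetry of the complex by the identity on the right-hand end. -/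
def autOfEquiv {top_bd : ∀ x, top (A.bd x) = 0} (f : C ≃ₗ[ℤ] C) (u : ℤˣ)
    (hbd : ∀ x, A.bd (f x) = f (A.bd x)) (haug : ∀ x, A.aug (f x) = A.aug x)
    (htop : ∀ x, top (f x) = u * top x) : (A.toSplice top top_bd).Aut :=
  ⟨(f.prodCongr (LinearEquiv.refl ℤ ℤ), u), fun x => Prod.ext (hbd x.1) (haug x.1),
    fun _ => Prod.ext (map_zero f) rfl, fun x => htop x.1⟩

end AugComplex

/-- The cellular chains of the cube `[0, 1]⁴`. -/
abbrev Cube : Type := Fin 3 → Fin 3 → Fin 3 → Fin 3 → ℤ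

namespace Cube

/-- The augmented cellular chain complex of the cube. -/
def complex : AugComplex Cube := AugComplex.point.interval.interval.interval.interval

lemma bd_apply (x : Cube) (a b c d : Fin 3) : complex.bd x a b c d =
    incidence a * x 2 b c d + cellSign a * incidence b * x a 2 c d +
      cellSign a * cellSign b * incidence c * x a b 2 d +
      cellSign a * cellSign b * cellSign c * incidence d * x a b c 2 := by
  simp only [complex, AugComplex.interval, AugComplex.point, AugComplex.intervalBd_apply,
    Pi.add_apply, Pi.smul_apply, LinearMap.zero_apply, smul_eq_mul]
  ring

/-- The exact complex `0 → ℤ → C₃ → C₂ → C₁ → C₀ → ℤ → 0` given by the boundary of the cube, the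
left-hand copy of `ℤ` being generated by the fundamental cycle. -/
def splice : Splice ℤ (Cube × ℤ) :=
  complex.toSplice
    (LinearMap.proj 2 ∘ₗ LinearMap.proj 2 ∘ₗ LinearMap.proj 2 ∘ₗ LinearMap.proj 2)
    fun x => by simp [bd_apply, incidence]

/-- The Koszul sign for moving the last factor of a cell to the front. -/
def koszulSign (a b c d : Fin 3) : ℤ :=
  if d = 2 then cellSign a * cellSign b * cellSign c else 1

/-- The effect on chains of the cyclic rotation of the coordinates. -/
def rotate : Module.End ℤ Cube where
  toFun x a b c d := koszulSign a b c d * x d a b c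
  map_add' x y := by
    funext a b c d
    simp [mul_add]
  map_smul' r x := by
    funext a b c d
    simp [mul_left_comm]

lemma rotate_apply (x : Cube) (a b c d : Fin 3) :
    rotate x a b c d = koszulSign a b c d * x d a b c := rfl

lemma koszulSign_rotations (a b c d : Fin 3) :
    koszulSign a b c d * koszulSign d a b c * koszulSign c d a b * koszulSign b c d a = 1 := by
  revert a b c d
  decide

lemma rotate_rotate_rotate_rotate (x : Cube) : rotate (rotate (rotate (rotate x))) = x := by
  funext a b c d
  simp only [rotate_apply]
  linear_combination x a b c d * koszulSign_rotations a b c d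

lemma koszulSign_incidence (a b c d : Fin 3) :
    incidence a * koszulSign 2 b c d = koszulSign a b c d * cellSign d * incidence a ∧
    incidence b * koszulSign a 2 c d = koszulSign a b c d * cellSign d * incidence b ∧
    incidence c * koszulSign a b 2 d = koszulSign a b c d * cellSign d * incidence c ∧
    cellSign a * cellSign b * cellSign c * incidence d * koszulSign a b c 2 =
      koszulSign a b c d * incidence d := by
  revert a b c d
  decide

lemma bd_rotate (x : Cube) : complex.bd (rotate x) = rotate (complex.bd x) := by
  funext a b c d
  obtain ⟨ha, hb, hc, hd⟩ := koszulSign_incidence a b c d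
  simp only [rotate_apply, bd_apply]
  linear_combination x d 2 b c * ha + cellSign a * x d a 2 c * hb +
    cellSign a * cellSign b * x d a b 2 * hc + x 2 a b c * hd

lemma aug_rotate (x : Cube) : complex.aug (rotate x) = complex.aug x := by
  simp [complex, AugComplex.interval, AugComplex.point, rotate_apply, koszulSign]
  abel

/-- The reflection of the interval, on cells. -/
def flipCell : Fin 3 → Fin 3 := ![1, 0, 2]

/-- The effect on chains of the reflection of the first coordinate. -/
def reflect : Module.End ℤ Cube where
  toFun x a b c d := cellSign a * x (flipCell a) b c d
  map_add' x y := by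
    funext a b c d
    simp [mul_add]
  map_smul' r x := by
    funext a b c d
    simp [mul_left_comm]

lemma reflect_apply (x : Cube) (a b c d : Fin 3) :
    reflect x a b c d = cellSign a * x (flipCell a) b c d := rfl

lemma cellSign_mul_self (a : Fin 3) : cellSign a * cellSign a = 1 := by
  revert a
  decide

lemma flipCell_flipCell (a : Fin 3) : flipCell (flipCell a) = a := by
  revert a
  decide

lemma cellSign_flipCell (a : Fin 3) : cellSign (flipCell a) = cellSign a := by
  revert a
  decide

lemma neg_incidence (a : Fin 3) : -incidence a = cellSign a * incidence (flipCell a) := by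
  revert a
  decide

lemma bd_reflect (x : Cube) : complex.bd (reflect x) = reflect (complex.bd x) := by
  funext a b c d
  simp only [reflect_apply, bd_apply, cellSign_flipCell, show flipCell 2 = 2 from rfl,
    show cellSign 2 = -1 from rfl]
  linear_combination x 2 b c d * neg_incidence a

lemma aug_reflect (x : Cube) : complex.aug (reflect x) = complex.aug x := by
  simp [complex, AugComplex.interval, AugComplex.point, reflect_apply, cellSign, flipCell]
  abel

lemma reflect_reflect (x : Cube) : reflect (reflect x) = x := by
  funext a b c d
  simp only [reflect_apply, cellSign_flipCell, flipCell_flipCell]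
  linear_combination x a b c d * cellSign_mul_self a

lemma koszulSign_flipCell (a b c d : Fin 3) :
    koszulSign (flipCell a) b c d = koszulSign a b c d ∧
    koszulSign a (flipCell b) c d = koszulSign a b c d ∧
    koszulSign a b (flipCell c) d = koszulSign a b c d ∧
    koszulSign a b c (flipCell d) = koszulSign a b c d := by
  revert a b c d
  decide

/-- The cyclic rotation as a symmetry of the boundary of the cube; it reverses the orientation. -/
def rotation : splice.Aut :=
  AugComplex.autOfEquiv
    (LinearEquiv.ofLinearMap rotate (rotate ^ 3) (LinearMap.ext rotate_rotate_rotate_rotate)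
      (LinearMap.ext rotate_rotate_rotate_rotate))
    (-1) bd_rotate aug_rotate fun x => by simp [rotate_apply, koszulSign, cellSign]

/-- The reflection of the first coordinate as a symmetry of the boundary of the cube; it reverses
the orientation. -/
def reflection : splice.Aut :=
  AugComplex.autOfEquiv
    (LinearEquiv.ofLinearMap reflect reflect (LinearMap.ext reflect_reflect)
      (LinearMap.ext reflect_reflect))
    (-1) bd_reflect aug_reflect fun x => by simp [reflect_apply, cellSign, flipCell]

lemma aut_ext {u v : splice.Aut} (hfst : ∀ x, u.1.1 x = v.1.1 x) (hsnd : u.1.2 = v.1.2) : u = v :=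
  Subtype.ext (Prod.ext (LinearEquiv.ext hfst) hsnd)

lemma rotation_pow_four : rotation ^ 4 = 1 :=
  aut_ext (fun x => Prod.ext (rotate_rotate_rotate_rotate x.1) rfl) rfl

lemma reflection_mul_self : reflection * reflection = 1 :=
  aut_ext (fun x => Prod.ext (reflect_reflect x.1) rfl) rfl

lemma commute_reflection_conj_rotation :
    Commute reflection (rotation * reflection * rotation⁻¹) := by
  refine aut_ext (fun x => Prod.ext ?_ rfl) (mul_comm _ _)
  change reflect (rotate (reflect (rotate (rotate (rotate x.1))))) =
    rotate (reflect (rotate (rotate (rotate (reflect x.1)))))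
  funext a b c d
  simp only [rotate_apply, reflect_apply, koszulSign_flipCell]
  ring

lemma commute_reflection_conj_rotation_sq :
    Commute reflection (rotation ^ 2 * reflection * (rotation ^ 2)⁻¹) := by
  have inv_sq : (rotation ^ 2)⁻¹ = rotation ^ 2 :=
    inv_eq_of_mul_eq_one_left (by rw [← pow_add, rotation_pow_four])
  rw [inv_sq]
  refine aut_ext (fun x => Prod.ext ?_ rfl) (mul_comm _ _)
  change reflect (rotate (rotate (reflect (rotate (rotate x.1))))) =
    rotate (rotate (reflect (rotate (rotate (reflect x.1)))))
  funext a b c d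
  simp only [rotate_apply, reflect_apply, koszulSign_flipCell]
  ring

lemma commute_reflection_conj_rotation_pow (k : ℕ) :
    Commute reflection (rotation ^ k * reflection * (rotation ^ k)⁻¹) := by
  have conj_inv : Commute reflection (rotation⁻¹ * reflection * rotation) := by
    have := (commute_reflection_conj_rotation.map (MulAut.conj rotation⁻¹)).symm
    simpa [mul_assoc] using this
  have pow_three : rotation ^ 3 = rotation⁻¹ :=
    eq_inv_of_mul_eq_one_left (by rw [← pow_succ, rotation_pow_four])
  rw [pow_eq_pow_mod k rotation_pow_four]
  have : k % 4 < 4 := Nat.mod_lt _ (by norm_num)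
  interval_cases k % 4
  · simp
  · simpa using commute_reflection_conj_rotation
  · exact commute_reflection_conj_rotation_sq
  · simpa [pow_three] using conj_inv

/-- The chain consisting of a single cell. -/
def cell (p q r s : Fin 3) : Cube := Pi.single p (Pi.single q (Pi.single r (Pi.single s 1)))

/-- A staircase for the action of the product of the reflection and the rotation, which acts freely
on the boundary of the cube. -/
def freeStaircase : ℕ → Cube × ℤ
  | 0 => (cell 1 1 1 1, 0)
  | 1 => (-cell 2 1 1 1, 0)
  | 2 => (cell 2 1 1 2 + cell 2 1 2 0 + cell 2 2 0 0
      - cell 1 2 0 2 - cell 1 2 2 1 - cell 1 1 2 2, 0)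
  | 3 => (cell 2 1 2 2 + cell 2 2 0 2 + cell 2 2 2 1, 0)
  | _ => (-3 • cell 2 2 2 2, 0)

lemma isStaircase_freeStaircase : IsStaircase splice.bd
    (periodicD 8 ((reflection * rotation).1.1 : (Cube × ℤ) →ₗ[ℤ] (Cube × ℤ))) (splice.bot 1) 4
    freeStaircase := by
  refine ⟨by decide +kernel, fun k hk => ?_⟩
  interval_cases k <;> decide +kernel

lemma top_freeStaircase : splice.top (freeStaircase 4) = -3 := by
  decide +kernel

end Cube

section Hom

variable {U : Type} [Group U]

theorem exists_latHom {n : ℕ} (D : Fin n → U) (hD : Pairwise fun i j => Commute (D i) (D j)) :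
    ∃ f : Lat n →* U, ∀ i, f (Multiplicative.ofAdd (Pi.single i 1)) = D i := by
  let coordHom : Fin n → Multiplicative ℤ →* U := fun i => zpowersHom U (D i)
  have hcomm : Pairwise fun i j => ∀ x y, Commute (coordHom i x) (coordHom j y) :=
    fun i j hij x y => (hD hij).zpow_zpow _ _
  refine ⟨(MonoidHom.noncommPiCoprod coordHom hcomm).comp
    (MulEquiv.piMultiplicative fun _ : Fin n => ℤ).toMonoidHom, fun i => ?_⟩
  have hsingle : MulEquiv.piMultiplicative (fun _ : Fin n => ℤ)
      (Multiplicative.ofAdd (Pi.single i 1)) = Pi.mulSingle i (Multiplicative.ofAdd 1) := by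
    ext j
    by_cases h : j = i
    · subst h
      simp [MulEquiv.piMultiplicative]
    · simp [MulEquiv.piMultiplicative, h]
  rw [MonoidHom.comp_apply, MulEquiv.toMonoidHom_eq_coe, MonoidHom.coe_coe, hsingle,
    MonoidHom.noncommPiCoprod_mulSingle]
  simp [coordHom]

lemma latHom_ext {n : ℕ} {f g : Lat n →* U}
    (h : ∀ i, f (Multiplicative.ofAdd (Pi.single i 1)) = g (Multiplicative.ofAdd (Pi.single i 1))) :
    f = g := by
  refine MonoidHom.ext fun l => ?_
  have hl : l = ∏ i, Multiplicative.ofAdd (Pi.single i 1) ^ l.toAdd i := by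
    refine Multiplicative.toAdd.injective ?_
    simp [toAdd_prod, ← Pi.single_smul', Finset.univ_sum_single]
  rw [hl]
  exact Subgroup.prod_mem (f.eqLocus g) fun i _ => zpow_mem (h i) _

end Hom

section Holonomy

lemma zmodHom_ofAdd_one {G : Type*} [Group G] (m : ℕ) [NeZero m] (α : G) (hα : α ^ m = 1) :
    zmodHom m α hα (Multiplicative.ofAdd 1) = α := by
  change α ^ (1 : ZMod m).val = α
  rw [ZMod.val_one_eq_one_mod, ← pow_eq_pow_mod 1 hα, pow_one]

lemma ofAdd_one_pow_val {m : ℕ} [NeZero m] (g : Multiplicative (ZMod m)) :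
    Multiplicative.ofAdd (1 : ZMod m) ^ g.toAdd.val = g := by
  rw [← ofAdd_nsmul]
  simp

variable {n q : ℕ} [NeZero q] {M : Matrix (Fin n) (Fin n) ℤ} {hq : M ^ q = 1}

lemma matAction_ofAdd_one (l : Lat n) :
    matAction q M hq (Multiplicative.ofAdd 1) l = Multiplicative.ofAdd (M *ᵥ l.toAdd) := by
  rw [matAction, zmodHom_ofAdd_one]
  rfl

theorem exists_crysHom {U : Type} [Group U] (f : Lat n →* U) {T : U} (hT : T ^ q = 1)
    (hf : ∀ i, f (Multiplicative.ofAdd (M.col i)) =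
      T * f (Multiplicative.ofAdd (Pi.single i 1)) * T⁻¹) :
    ∃ Φ : Crys q M hq →* U, (∀ l, Φ (SemidirectProduct.inl l) = f l) ∧
      Φ (SemidirectProduct.inr (Multiplicative.ofAdd 1)) = T := by
  have conj_gen : f.comp (matAction q M hq (Multiplicative.ofAdd 1)).toMonoidHom =
      (MulAut.conj T).toMonoidHom.comp f :=
    latHom_ext fun i => by simpa [matAction_ofAdd_one] using hf i
  have conj_pow : ∀ (k : ℕ) (l : Lat n), f (matAction q M hq (Multiplicative.ofAdd 1 ^ k) l) =
      MulAut.conj (T ^ k) (f l) := fun k => by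
    induction k with
    | zero => simp
    | succ k ih =>
      intro l
      rw [pow_succ', pow_succ', map_mul, map_mul, MulAut.mul_apply, MulAut.mul_apply, ← ih]
      exact DFunLike.congr_fun conj_gen _
  refine ⟨SemidirectProduct.lift f (zmodHom q T hT) fun g => ?_, fun l => by simp, ?_⟩
  · refine MonoidHom.ext fun l => ?_
    have hl := conj_pow g.toAdd.val l
    rwa [ofAdd_one_pow_val] at hl
  · rw [SemidirectProduct.lift_inr, zmodHom_ofAdd_one]

lemma inl_mul_inr_pow (v : Fin n → ℤ) (k : ℕ) :
    (SemidirectProduct.inl (Multiplicative.ofAdd v) *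
        SemidirectProduct.inr (Multiplicative.ofAdd 1) : Crys q M hq) ^ k =
      SemidirectProduct.inl (Multiplicative.ofAdd ((∑ i ∈ Finset.range k, M ^ i) *ᵥ v)) *
        SemidirectProduct.inr (Multiplicative.ofAdd 1 ^ k) := by
  induction k with
  | zero => simp
  | succ k ih =>
    rw [pow_succ', ih, geom_sum_succ]
    refine SemidirectProduct.ext ?_ (by simp [pow_succ'])
    simp [matAction_ofAdd_one, ← ofAdd_add, Matrix.add_mulVec, add_comm, -map_pow]

end Holonomy

section Gamma

lemma commute_conj_pow {U : Type*} [Group U] {d T : U}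
    (h : ∀ k : ℕ, Commute d (T ^ k * d * (T ^ k)⁻¹)) (i j : ℕ) :
    Commute (MulAut.conj (T ^ i) d) (MulAut.conj (T ^ j) d) := by
  have commute_add (i k : ℕ) : Commute (MulAut.conj (T ^ i) d) (MulAut.conj (T ^ (i + k)) d) := by
    rw [pow_add, map_mul, MulAut.mul_apply]
    exact (h k).map _
  rcases le_total i j with hij | hij
  · simpa only [Nat.add_sub_of_le hij] using commute_add i (j - i)
  · simpa only [Nat.add_sub_of_le hij] using (commute_add j (i - j)).symm

theorem exists_gammaHom {U : Type} [Group U] {d T : U} (hd : d * d = 1) (hT : T ^ 4 = 1)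
    (hcomm : ∀ k : ℕ, Commute d (T ^ k * d * (T ^ k)⁻¹)) :
    ∃ Φ : Crys 8 holM holM_pow →* U,
      Φ (SemidirectProduct.inl (Multiplicative.ofAdd (Pi.single 0 1))) = d ∧
      Φ (SemidirectProduct.inr (Multiplicative.ofAdd 1)) = T := by
  let D (k : ℕ) : U := MulAut.conj (T ^ k) d
  have D_succ (k : ℕ) : T * D k * T⁻¹ = D (k + 1) := by
    simp only [D, pow_succ', map_mul, MulAut.mul_apply, MulAut.conj_apply T]
  have D_four : D 4 = D 0 := by simp only [D, hT, pow_zero]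
  have D_sq (k : ℕ) : D k * D k = 1 := by rw [← map_mul, hd, map_one]
  obtain ⟨f, hf⟩ := exists_latHom (fun i : Fin 5 => D i) fun i j _ => commute_conj_pow hcomm i j
  have hT8 : T ^ 8 = 1 := by rw [show 8 = 4 * 2 from rfl, pow_mul, hT, one_pow]
  have f_last : f (Multiplicative.ofAdd (holM.col 4)) = D 5 := by
    have col_last : holM.col 4 = -(Pi.single 4 1 + Pi.single 0 1 + Pi.single 1 1) := by
      decide +kernel
    rw [col_last, ofAdd_neg, ofAdd_add, ofAdd_add, map_inv, map_mul, map_mul, hf, hf, hf]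
    change (D 4 * D 0 * D 1)⁻¹ = D 5
    rw [← D_succ 4, D_four, D_sq, one_mul, D_succ, inv_eq_of_mul_eq_one_right (D_sq 1)]
  have f_col (i : Fin 5) : f (Multiplicative.ofAdd (holM.col i)) =
      T * f (Multiplicative.ofAdd (Pi.single i 1)) * T⁻¹ := by
    rw [hf, D_succ]
    induction i using Fin.lastCases with
    | last => exact f_last
    | cast i =>
      have col_castSucc : ∀ i : Fin 4, holM.col i.castSucc = Pi.single i.succ 1 := by
        decide +kernel
      rw [col_castSucc, hf]
      rfl
  obtain ⟨Φ, hΦ, hΦT⟩ := exists_crysHom (M := holM) (hq := holM_pow) f hT8 f_col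
  exact ⟨Φ, by rw [hΦ, hf]; simp [D], hΦT⟩

end Gamma

section EulerSquare

-- Keeps the unifier from unfolding the recursion at the numeral `8`.
attribute [local irreducible] periodicEval

namespace Cube

lemma rotation_freeStaircase_zero : rotation.1.1 (freeStaircase 0) = freeStaircase 0 := by
  decide +kernel

variable {G : Type} [Group G]

theorem exists_eulerSquare (Φ : G →* splice.Aut) :
    ∃ F : LinearMap.ker (cochainD (1 : Representation ℤ G ℤ) 8), ∀ τ : G, τ ^ 8 = 1 →
      (Φ τ = rotation → 8 ∣ periodicEval ℤ ℤ 8 τ 8 F) ∧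
      (Φ τ = reflection * rotation → Odd (periodicEval ℤ ℤ 8 τ 8 F)) := by
  obtain ⟨F, hF, eval_F⟩ := (Splice.Aut.isEquivariant Φ).exists_square
    (show Odd 3 by decide) rfl (show 4 + 4 = 8 from rfl)
  refine ⟨⟨F, hF⟩, fun τ hτ => ⟨fun hΦ => ?_, fun hΦ => ?_⟩⟩
  · have fixed : Splice.Aut.rep Φ τ (freeStaircase 0) = freeStaircase 0 := by
      change (Φ τ).1.1 (freeStaircase 0) = freeStaircase 0
      rw [hΦ, rotation_freeStaircase_zero]
    exact_mod_cast (eval_F 8 τ hτ).1 (freeStaircase 0) isStaircase_freeStaircase.bd_zero fixed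
  · have hχ : Splice.Aut.char Φ τ = 1 := by
      change (Φ τ).1.2 = 1
      rw [hΦ]
      decide +kernel
    have hρ : Splice.Aut.rep Φ τ = ((reflection * rotation).1.1 : _ →ₗ[ℤ] _) := by
      rw [← hΦ]
      rfl
    obtain ⟨w, hw⟩ := (eval_F 8 τ hτ).2 freeStaircase hχ (hρ ▸ isStaircase_freeStaircase)
    rw [top_freeStaircase, sub_eq_iff_eq_add] at hw
    refine ⟨4 * w + 4, hw.trans ?_⟩
    push_cast
    ring

end Cube

section Detection

variable {G : Type} [Group G] {n d q : ℕ}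

lemma dvd_mul_periodicEval (hn : Odd n) (hd : n + 1 = d) {τ : G} (hτ : τ ^ q = 1) {m : ℕ}
    {F : LinearMap.ker (cochainD (1 : Representation ℤ G ℤ) d)}
    (hF : m • cohClass 1 d F = 0) : (q : ℤ) ∣ m * periodicEval ℤ ℤ q τ d F := by
  subst hd
  rw [← map_nsmul] at hF
  obtain ⟨K, hK⟩ := (cohClass_eq_zero_iff 1 n _).1 hF
  have eval_smul : m * periodicEval ℤ ℤ q τ (n + 1) F =
      periodicEval ℤ ℤ q τ (n + 1) (m • F.1) := by rw [map_nsmul, nsmul_eq_mul]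
  rw [eval_smul, ← Submodule.coe_smul_of_tower, ← hK, periodicEval_cochainD 1 hτ,
    MonoidHom.one_apply, periodicD_one_of_odd q hn]
  simp

theorem four_nsmul_cohClass_ne (hn : Odd n) (hd : n + 1 = d)
    {a b : LinearMap.ker (cochainD (1 : Representation ℤ G ℤ) d)} {s t : G}
    (hs : s ^ 8 = 1) (ht : t ^ 8 = 1) (has : Odd (periodicEval ℤ ℤ 8 s d a))
    (hat : 8 ∣ periodicEval ℤ ℤ 8 t d a) (hbt : Odd (periodicEval ℤ ℤ 8 t d b)) :
    4 • cohClass 1 d a ≠ 0 ∧ 4 • cohClass 1 d b ≠ 0 ∧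
      4 • cohClass 1 d a ≠ 4 • cohClass 1 d b := by
  refine ⟨fun h => ?_, fun h => ?_, fun h => ?_⟩
  · have := dvd_mul_periodicEval hn hd hs h
    grind
  · have := dvd_mul_periodicEval hn hd ht h
    grind
  · have hab : 4 • cohClass 1 d (b - a) = 0 := by
      rw [map_sub, smul_sub, h, sub_self]
    have := dvd_mul_periodicEval hn hd ht hab
    rw [Submodule.coe_sub, map_sub] at this
    grind

end Detection

theorem exists_four_nsmul_ne : ∃ a b : H 8, 4 • a ≠ 0 ∧ 4 • b ≠ 0 ∧ 4 • a ≠ 4 • b := by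
  let t : Crys 8 holM holM_pow := SemidirectProduct.inr (Multiplicative.ofAdd 1)
  let s : Crys 8 holM holM_pow :=
    SemidirectProduct.inl (Multiplicative.ofAdd (Pi.single 0 1)) * t
  have geom_sum_holM : ∑ i ∈ Finset.range 8, holM ^ i = 0 := by decide +kernel
  have gen_pow : (Multiplicative.ofAdd (1 : ZMod 8)) ^ 8 = 1 := by decide
  have ht : t ^ 8 = 1 := by rw [← map_pow, gen_pow, map_one]
  have hs : s ^ 8 = 1 := by
    rw [inl_mul_inr_pow, geom_sum_holM, gen_pow, Matrix.zero_mulVec, ofAdd_zero, map_one, map_one,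
      mul_one]
  obtain ⟨Φ, hΦ, hΦt⟩ := exists_gammaHom Cube.reflection_mul_self Cube.rotation_pow_four
    Cube.commute_reflection_conj_rotation_pow
  have hΦs : Φ s = Cube.reflection * Cube.rotation := by rw [map_mul, hΦ, hΦt]
  obtain ⟨Ψ, -, hΨt⟩ := exists_crysHom (M := holM) (hq := holM_pow) 1
    (show (Cube.reflection * Cube.rotation) ^ 8 = 1 by rw [← hΦs, ← map_pow, hs, map_one])
    (by simp)
  obtain ⟨a, ha⟩ := Cube.exists_eulerSquare Φ
  obtain ⟨b, hb⟩ := Cube.exists_eulerSquare Ψ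
  have key := four_nsmul_cohClass_ne (n := 7) (by decide) rfl hs ht
    ((ha s hs).2 hΦs) ((ha t ht).1 hΦt) ((hb t ht).2 hΨt)
  exact ⟨cohClass 1 8 a, cohClass 1 8 b, key⟩

end EulerSquare

section Generation

variable {R M N P : Type} [CommRing R] [AddCommGroup M] [Module R M] [AddCommGroup N] [Module R N]
  [AddCommGroup P] [Module R P]

/-- The `R`-module `M` can be generated by `n` elements. -/
def IsGeneratedBy (R : Type) [CommRing R] (n : ℕ) (M : Type) [AddCommGroup M] [Module R M] : Prop :=
  ∃ f : (Fin n → R) →ₗ[R] M, Function.Surjective f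

namespace IsGeneratedBy

lemma of_subsingleton [Subsingleton M] (n : ℕ) : IsGeneratedBy R n M :=
  ⟨0, fun x => ⟨0, Subsingleton.elim _ x⟩⟩

lemma self : IsGeneratedBy R 1 R :=
  ⟨(LinearEquiv.funUnique (Fin 1) R R).toLinearMap, (LinearEquiv.funUnique (Fin 1) R R).surjective⟩

lemma of_surjective {n : ℕ} (h : IsGeneratedBy R n M) (f : M →ₗ[R] N)
    (hf : Function.Surjective f) : IsGeneratedBy R n N := by
  obtain ⟨g, hg⟩ := h
  exact ⟨f ∘ₗ g, hf.comp hg⟩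

lemma mono {n m : ℕ} (h : IsGeneratedBy R n M) (hnm : n ≤ m) : IsGeneratedBy R m M := by
  obtain ⟨g, hg⟩ := h
  exact ⟨g ∘ₗ LinearMap.funLeft R R (Fin.castLE hnm), hg.comp
    (LinearMap.funLeft_surjective_of_injective R R _ (Fin.castLE_injective hnm))⟩

lemma submodule [IsDomain R] [IsPrincipalIdealRing R] {n : ℕ} (h : IsGeneratedBy R n M)
    (S : Submodule R M) : IsGeneratedBy R n S := by
  obtain ⟨g, hg⟩ := h
  have hrank : Module.finrank R (S.comap g) ≤ n := by
    simpa using Submodule.finrank_le (S.comap g)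
  have hcomap : IsGeneratedBy R (Module.finrank R (S.comap g)) (S.comap g) :=
    ⟨(Module.finBasis R _).equivFun.symm.toLinearMap,
      (Module.finBasis R _).equivFun.symm.surjective⟩
  refine (hcomap.mono hrank).of_surjective (g.restrict fun _ hx => hx) fun y => ?_
  obtain ⟨x, hx⟩ := hg y
  exact ⟨⟨x, by simp [hx]⟩, Subtype.ext hx⟩

lemma of_injective [IsDomain R] [IsPrincipalIdealRing R] {n : ℕ} (h : IsGeneratedBy R n N)
    (f : M →ₗ[R] N) (hf : Function.Injective f) : IsGeneratedBy R n M :=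
  (h.submodule (LinearMap.range f)).of_surjective (LinearEquiv.ofInjective f hf).symm.toLinearMap
    (LinearEquiv.ofInjective f hf).symm.surjective

lemma of_exact [IsDomain R] [IsPrincipalIdealRing R] {a c : ℕ} (hM : IsGeneratedBy R a M)
    (hP : IsGeneratedBy R c P) (f : M →ₗ[R] N) (g : N →ₗ[R] P)
    (hfg : ∀ x, g x = 0 → ∃ y, f y = x) : IsGeneratedBy R (a + c) N := by
  obtain ⟨u, hu⟩ := hM
  obtain ⟨v, hv⟩ := hP.submodule (LinearMap.range g)
  obtain ⟨w, hw⟩ := Module.projective_lifting_property g.rangeRestrict v g.surjective_rangeRestrict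
  let e := (LinearEquiv.funCongrLeft R R (finSumFinEquiv (m := a) (n := c))).trans
    (LinearEquiv.sumArrowLequivProdArrow (Fin a) (Fin c) R R)
  refine ⟨(f ∘ₗ u).coprod w ∘ₗ e.toLinearMap,
    Function.Surjective.comp (g := (f ∘ₗ u).coprod w) (fun x => ?_) e.surjective⟩
  obtain ⟨z, hz⟩ := hv (g.rangeRestrict x)
  have hgw : g (w z) = g x := congrArg Subtype.val ((DFunLike.congr_fun hw z).trans hz)
  obtain ⟨y, hy⟩ := hfg (x - w z) (by rw [map_sub, hgw, sub_self])
  obtain ⟨y', rfl⟩ := hu y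
  exact ⟨(y', z), by simp [hy]⟩

end IsGeneratedBy

end Generation

section Coinduced

variable {R Γ : Type} [CommRing R]

lemma rep_exact [Group Γ] (S : ShortComplex (Rep.{0} R Γ))
    (h : ∀ x, S.g.hom x = 0 → ∃ y, S.f.hom y = x) : S.Exact := by
  rw [← S.exact_map_iff_of_faithful (forget₂ (Rep.{0} R Γ) (ModuleCat.{0} R)),
    ShortComplex.moduleCat_exact_iff]
  exact h

lemma exists_intAntiderivative {A : Type} [AddCommGroup A] (f : ℤ → A) :
    ∃ F : ℤ → A, ∀ n, F (n + 1) - F n = f n := by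
  refine ⟨fun n => n.inductionOn' 0 0 (fun k _ F => F + f k) fun k _ F => F - f (k - 1),
    fun n => ?_⟩
  beta_reduce
  rcases lt_or_ge n 0 with hn | hn
  · obtain ⟨m, rfl⟩ : ∃ m, n = m - 1 := ⟨n + 1, by ring⟩
    rw [sub_add_cancel, Int.inductionOn'_sub_one (show m ≤ 0 by omega), sub_sub_cancel]
  · rw [Int.inductionOn'_add_one hn, add_sub_cancel_left]

variable [CommGroup Γ] (p : Γ →* Multiplicative ℤ) (t : Γ)

/-- The representation of `Γ` coinduced from the trivial one of `ker p`, that is, the functions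
`Γ → R` which factor through `p`. -/
noncomputable abbrev coindKer (R : Type) [CommRing R] : Rep R Γ :=
  Rep.coind p.ker.subtype (Rep.trivial R p.ker R)

lemma mem_coindKer (f : Γ → R) :
    f ∈ Representation.coindV p.ker.subtype (Rep.trivial R p.ker R).ρ ↔
      ∀ s ∈ p.ker, ∀ h, f (s * h) = f h :=
  ⟨fun hf s hs h => hf ⟨s, hs⟩ h, fun hf s h => hf s.1 s.2 h⟩

variable {p} in
lemma coindKer_congr (f : coindKer p R) {g h : Γ} (hgh : p g = p h) : f.1 g = f.1 h := by
  have hker : g * h⁻¹ ∈ p.ker := by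
    rw [MonoidHom.mem_ker, map_mul, map_inv, hgh, mul_inv_cancel]
  simpa using (mem_coindKer p _).1 f.2 _ hker h

/-- The embedding of `R` into `coindKer p R` as the constant functions. -/
noncomputable def constCoindKer : Rep.trivial R Γ R ⟶ coindKer p R := Rep.ofHom
  { toFun := fun r => ⟨fun _ => r, (mem_coindKer p _).2 fun _ _ _ => rfl⟩
    map_add' := fun _ _ => rfl
    map_smul' := fun _ _ => rfl
    isIntertwining' := fun _ => rfl }

/-- The difference operator `f ↦ f (t * ·) - f` on `coindKer p R`. -/
noncomputable def diffCoindKer : coindKer p R ⟶ coindKer p R := Rep.ofHom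
  { toFun := fun f => ⟨fun h => f.1 (t * h) - f.1 h, (mem_coindKer p _).2 fun s hs h => by
      rw [(mem_coindKer p _).1 f.2 s hs h, mul_left_comm, (mem_coindKer p _).1 f.2 s hs]⟩
    map_add' := fun x y => Subtype.ext <| funext fun h => add_sub_add_comm (x.1 (t * h)) _ _ _
    map_smul' := fun r x => Subtype.ext <| funext fun h => (smul_sub r (x.1 (t * h)) _).symm
    isIntertwining' := fun g => LinearMap.ext fun x => Subtype.ext <| funext fun h =>
      congrArg (x.1 · - x.1 (h * g)) (mul_assoc t h g) }

/-- The sequence `R → coindKer p R → coindKer p R`, which is short exact if `p t = 1`. -/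
noncomputable def coindKerSequence (R : Type) [CommRing R] : ShortComplex (Rep R Γ) where
  X₁ := Rep.trivial R Γ R
  X₂ := coindKer p R
  X₃ := coindKer p R
  f := constCoindKer p
  g := diffCoindKer p t
  zero := by
    ext
    exact sub_self (1 : R)

variable {p t}

lemma diffCoindKer_surjective (ht : p t = Multiplicative.ofAdd 1) :
    Function.Surjective (diffCoindKer (R := R) p t).hom := by
  intro f
  obtain ⟨F, hF⟩ := exists_intAntiderivative fun n => f.1 (t ^ n)
  refine ⟨⟨fun h => F (p h).toAdd, (mem_coindKer p _).2 fun s hs h => by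
    rw [map_mul, MonoidHom.mem_ker.1 hs, one_mul]⟩, Subtype.ext <| funext fun h => ?_⟩
  change F (p (t * h)).toAdd - F (p h).toAdd = f.1 h
  rw [map_mul, ht, toAdd_mul, toAdd_ofAdd, add_comm, hF]
  exact coindKer_congr f (by simp [ht, ← ofAdd_zsmul])

lemma exists_const_of_diffCoindKer_eq_zero (ht : p t = Multiplicative.ofAdd 1) (f : coindKer p R)
    (hf : (diffCoindKer p t).hom f = 0) : ∃ r, (constCoindKer p).hom r = f := by
  have apply_mul : ∀ h, f.1 (t * h) = f.1 h := fun h =>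
    sub_eq_zero.1 (congrFun (congrArg Subtype.val hf) h)
  have apply_zpow : ∀ n : ℤ, f.1 (t ^ n) = f.1 1 := fun n => by
    induction n with
    | zero => rw [zpow_zero]
    | succ n ih => rw [_root_.zpow_add_one, mul_comm, apply_mul, ih]
    | pred n ih => rw [← apply_mul, mul_comm, ← _root_.zpow_add_one, sub_add_cancel, ih]
  refine ⟨f.1 1, Subtype.ext <| funext fun h => ?_⟩
  change f.1 1 = f.1 h
  rw [← apply_zpow (p h).toAdd]
  exact coindKer_congr f (by simp [ht, ← ofAdd_zsmul])

lemma coindKerSequence_shortExact (ht : p t = Multiplicative.ofAdd 1) :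
    (coindKerSequence p t R).ShortExact where
  exact := rep_exact _ (exists_const_of_diffCoindKer_eq_zero ht)
  mono_f := (Rep.mono_iff_injective _).2 fun _ _ h => congrFun (congrArg Subtype.val h) 1
  epi_g := (Rep.epi_iff_surjective _).2 (diffCoindKer_surjective ht)

-- Long exact sequence of `coindKerSequence` together with Shapiro's lemma.
lemma isGeneratedBy_groupCohomology_succ [IsDomain R] [IsPrincipalIdealRing R]
    (ht : p t = Multiplicative.ofAdd 1) {j c d : ℕ}
    (hj : IsGeneratedBy R c (groupCohomology (Rep.trivial R p.ker R) j))
    (hj' : IsGeneratedBy R d (groupCohomology (Rep.trivial R p.ker R) (j + 1))) :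
    IsGeneratedBy R (c + d) (groupCohomology (Rep.trivial R Γ R) (j + 1)) := by
  have shapiro : ∀ {i e}, IsGeneratedBy R e (groupCohomology (Rep.trivial R p.ker R) i) →
      IsGeneratedBy R e (groupCohomology (coindKer p R) i) := fun {i e} he =>
    let w := (coindIso (Rep.trivial R p.ker R) i).toLinearEquiv
    he.of_surjective w.symm.toLinearMap w.symm.surjective
  have hex := mapShortComplex₁_exact (coindKerSequence_shortExact (R := R) ht)
    (i := j) (j := j + 1) rfl
  rw [ShortComplex.moduleCat_exact_iff] at hex
  exact (shapiro hj).of_exact (shapiro hj') _ _ hex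

end Coinduced

section Lattice

variable {R : Type} [CommRing R]

lemma isGeneratedBy_groupCohomology_zero [IsDomain R] [IsPrincipalIdealRing R]
    (Γ : Type) [Group Γ] : IsGeneratedBy R 1 (groupCohomology (Rep.trivial R Γ R) 0) :=
  IsGeneratedBy.self.of_injective
    (Submodule.subtype _ ∘ₗ (H0Iso (Rep.trivial R Γ R)).toLinearEquiv.toLinearMap)
    (Subtype.val_injective.comp (H0Iso (Rep.trivial R Γ R)).toLinearEquiv.injective)

/-- The first coordinate of a group identified with `ℤ^(n+1)`. -/
def headHom {Γ : Type} [CommGroup Γ] {n : ℕ} (e : Γ ≃* Lat (n + 1)) : Γ →* Multiplicative ℤ :=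
  (AddMonoidHom.toMultiplicative (Pi.evalAddMonoidHom (fun _ => ℤ) 0)).comp e.toMonoidHom

/-- The kernel of the first coordinate of `ℤ^(n+1)` is `ℤ^n`. -/
def kerHeadHomEquiv {Γ : Type} [CommGroup Γ] {n : ℕ} (e : Γ ≃* Lat (n + 1)) :
    (headHom e).ker ≃* Lat n where
  toFun g := Multiplicative.ofAdd (Fin.tail (e g.1).toAdd)
  invFun v := ⟨e.symm (Multiplicative.ofAdd (Fin.cons 0 v.toAdd)), by
    simp [headHom]⟩
  left_inv g := by
    have hg : (e g.1).toAdd 0 = 0 := g.2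
    refine Subtype.ext (e.injective ?_)
    change e (e.symm _) = _
    rw [e.apply_symm_apply, toAdd_ofAdd, ← hg, Fin.cons_self_tail, ofAdd_toAdd]
  right_inv v := by
    change Multiplicative.ofAdd (Fin.tail (e (e.symm _)).toAdd) = v
    rw [e.apply_symm_apply]
    rfl
  map_mul' g h := by
    change Multiplicative.ofAdd (Fin.tail (e (g.1 * h.1)).toAdd) = _
    rw [map_mul]
    rfl

theorem isGeneratedBy_groupCohomology_lat [IsDomain R] [IsPrincipalIdealRing R] {n : ℕ}
    {Γ : Type} [CommGroup Γ] (e : Γ ≃* Lat n) (j : ℕ) :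
    IsGeneratedBy R (n.choose j) (groupCohomology (Rep.trivial R Γ R) j) := by
  induction n generalizing Γ j with
  | zero =>
    cases j with
    | zero => exact isGeneratedBy_groupCohomology_zero Γ
    | succ j =>
      have : Subsingleton Γ := e.toEquiv.subsingleton
      have := ModuleCat.subsingleton_of_isZero
        (isZero_groupCohomology_succ_of_subsingleton (Rep.trivial R Γ R) j)
      exact IsGeneratedBy.of_subsingleton _
  | succ n ih =>
    cases j with
    | zero => simpa using isGeneratedBy_groupCohomology_zero Γ
    | succ j =>
      have ht : headHom e (e.symm (Multiplicative.ofAdd (Pi.single 0 1))) =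
          Multiplicative.ofAdd 1 := by
        simp [headHom]
      exact isGeneratedBy_groupCohomology_succ ht
        (ih (kerHeadHomEquiv e) j) (ih (kerHeadHomEquiv e) (j + 1))

end Lattice

section AlternatingEvaluation

variable {R Γ A : Type} [CommRing R] [AddCommGroup A] [Module R A]

variable (R A) in
/-- The alternating sum of the values of a cochain at the permutations of a tuple. -/
def altEval {n : ℕ} (v : Fin n → Γ) : ((Fin n → Γ) → A) →ₗ[R] A :=
  ∑ σ : Equiv.Perm (Fin n), Equiv.Perm.sign σ • LinearMap.proj (v ∘ σ)

lemma altEval_apply {n : ℕ} (v : Fin n → Γ) (F : (Fin n → Γ) → A) :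
    altEval R A v F = ∑ σ : Equiv.Perm (Fin n), Equiv.Perm.sign σ • F (v ∘ σ) := by
  simp [altEval]

lemma contractNth_last [Group Γ] {n : ℕ} (w : Fin (n + 1) → Γ) :
    Fin.contractNth (Fin.last n) (· * ·) w = w ∘ Fin.castSucc :=
  funext fun _ => Fin.contractNth_apply_of_lt _ _ _ _ (by simp)

lemma contractNth_comp_swap [CommGroup Γ] {n : ℕ} (i : Fin n) (w : Fin (n + 1) → Γ) :
    Fin.contractNth i.castSucc (· * ·) (w ∘ Equiv.swap i.castSucc i.succ) =
      Fin.contractNth i.castSucc (· * ·) w := by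
  funext k
  rcases lt_trichotomy (k : ℕ) (i.castSucc : Fin (n + 1)) with h | h | h
  · rw [Fin.contractNth_apply_of_lt _ _ _ _ h, Fin.contractNth_apply_of_lt _ _ _ _ h,
      Function.comp_apply, Equiv.swap_apply_of_ne_of_ne] <;>
    simp only [ne_eq, Fin.ext_iff, Fin.val_castSucc, Fin.val_succ] at h ⊢ <;> omega
  · obtain rfl : k = i := Fin.ext (by simpa using h)
    rw [Fin.contractNth_apply_of_eq _ _ _ _ h, Fin.contractNth_apply_of_eq _ _ _ _ h,
      Function.comp_apply, Function.comp_apply, Equiv.swap_apply_left, Equiv.swap_apply_right,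
      mul_comm]
  · rw [Fin.contractNth_apply_of_gt _ _ _ _ h, Fin.contractNth_apply_of_gt _ _ _ _ h,
      Function.comp_apply, Equiv.swap_apply_of_ne_of_ne] <;>
    simp only [ne_eq, Fin.ext_iff, Fin.val_castSucc, Fin.val_succ] at h ⊢ <;> omega

lemma altEval_contractNth [CommGroup Γ] {n : ℕ} (v : Fin (n + 1) → Γ) (F : (Fin n → Γ) → A)
    (i : Fin n) :
    altEval R A v (fun w => F (Fin.contractNth i.castSucc (· * ·) w)) = 0 := by
  have hne : i.castSucc ≠ i.succ := Fin.castSucc_lt_succ.ne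
  rw [altEval_apply]
  refine Finset.sum_involution (fun σ _ => σ * Equiv.swap i.castSucc i.succ) (fun σ _ => ?_)
    (fun σ _ _ => ?_) (fun σ _ => Finset.mem_univ _) fun σ _ => by simp [mul_assoc]
  · rw [Equiv.Perm.sign_mul, Equiv.Perm.sign_swap hne, Equiv.Perm.coe_mul, ← Function.comp_assoc,
      contractNth_comp_swap]
    simp
  · simpa [Equiv.swap_eq_one_iff] using hne

lemma altEval_comp_succ {n : ℕ} (v : Fin (n + 1) → Γ) (F : (Fin n → Γ) → A) :
    altEval R A v (fun w => F (w ∘ Fin.succ)) =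
      (-1 : R) ^ n • altEval R A v (fun w => F (w ∘ Fin.castSucc)) := by
  have rotate_castSucc (σ : Equiv.Perm (Fin (n + 1))) :
      v ∘ ⇑(σ * finRotate (n + 1)) ∘ Fin.castSucc = v ∘ σ ∘ Fin.succ := by
    funext k
    simp [Fin.coeSucc_eq_succ]
  rw [altEval_apply, altEval_apply, Finset.smul_sum, eq_comm,
    ← Equiv.sum_comp (Equiv.mulRight (finRotate (n + 1)))]
  refine Finset.sum_congr rfl fun σ _ => ?_
  simp only [Equiv.coe_mulRight, Function.comp_assoc, rotate_castSucc, map_mul, sign_finRotate]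
  rcases Nat.even_or_odd n with hn | hn <;> simp [hn.neg_one_pow]

theorem altEval_cochainD [CommGroup Γ] {n : ℕ} (v : Fin (n + 1) → Γ) (F : (Fin n → Γ) → A) :
    altEval R A v (cochainD (1 : Representation R Γ A) n F) = 0 := by
  have hF : cochainD (1 : Representation R Γ A) n F = (fun w => F (w ∘ Fin.succ)) +
      (∑ i : Fin n, (-1 : R) ^ ((i : ℕ) + 1) •
          fun w => F (Fin.contractNth i.castSucc (· * ·) w)) +
        (-1 : R) ^ (n + 1) • fun w => F (w ∘ Fin.castSucc) := by
    funext w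
    simp [cochainD_apply, Fin.sum_univ_castSucc, contractNth_last, Function.comp_def, add_assoc]
  rw [hF, map_add, map_add, map_sum, altEval_comp_succ, map_smul, pow_succ]
  simp [altEval_contractNth]

/-- The cross product of additive characters of `Γ`, as a cochain. -/
def charProd {n : ℕ} (l : Fin n → Γ → R) : (Fin n → Γ) → R :=
  fun w => ∏ i, l i (w i)

lemma charProd_cons {n : ℕ} (l : Fin (n + 1) → Γ → R) (g : Γ) (w : Fin n → Γ) :
    charProd l (Fin.cons g w) = l 0 g * charProd (Fin.tail l) w := by
  simp [charProd, Fin.prod_univ_succ, Fin.tail]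

lemma cochainD_charProd [Group Γ] {n : ℕ} (l : Fin n → Γ → R)
    (hl : ∀ i g h, l i (g * h) = l i g + l i h) :
    cochainD (1 : Representation R Γ R) n (charProd l) = 0 := by
  induction n with
  | zero => funext w; simp [cochainD_apply, charProd]
  | succ n ih =>
    have slice_charProd (g : Γ) : slice R g (charProd l) = l 0 g • charProd (Fin.tail l) :=
      funext fun w => charProd_cons l g w
    funext w
    rw [← Fin.cons_self_tail w]
    set v := Fin.tail w
    have hv := charProd_cons l (v 0) (Fin.tail v)
    rw [Fin.cons_self_tail] at hv
    change slice R (w 0) (cochainD (1 : Representation R Γ R) (n + 1) (charProd l)) v = 0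
    rw [slice_cochainD, slice_charProd, map_smul, ih (Fin.tail l) fun i => hl i.succ]
    simp [sliceDefect, charProd_cons, hl, hv]
    ring

lemma altEval_charProd {n : ℕ} (v : Fin n → Γ) (l : Fin n → Γ → R) :
    altEval R R v (charProd l) = (Matrix.of fun a i => l i (v a)).det := by
  rw [altEval_apply, Matrix.det_apply]
  rfl

end AlternatingEvaluation

section InducedAction

variable {R G L V : Type} [CommRing R] [Group G] [Group L] [AddCommGroup V] [Module R V]

lemma cohRep_cohClass (φ : G →* MulAut L) (ψ : Representation R G V) (g : G) {n : ℕ}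
    {F F' : LinearMap.ker (cochainD (1 : Representation R L V) n)}
    (hF : ∀ w, F'.1 w = ψ g (F.1 fun i => φ g⁻¹ (w i))) :
    (cohRep φ ψ n).ρ g (cohClass 1 n F) = cohClass 1 n F' := by
  let pullback := cochainsMap (Rep.trivial R L V) (Rep.trivial R L V) (φ g⁻¹).toMonoidHom (ψ g)
    fun _ _ => rfl
  have cycles_pullback : (HomologicalComplex.cyclesMap pullback n).hom
      ((cocyclesEquivKer 1 n).symm F) = (cocyclesEquivKer 1 n).symm F' := by
    refine (cocyclesEquivKer 1 n).injective (Subtype.ext ?_)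
    rw [LinearEquiv.apply_symm_apply]
    refine (congrArg (fun f => f.hom ((cocyclesEquivKer 1 n).symm F))
      (HomologicalComplex.cyclesMap_i pullback n)).trans ?_
    refine (congrArg (pullback.f n).hom
      (congrArg Subtype.val ((cocyclesEquivKer 1 n).apply_symm_apply F))).trans ?_
    exact funext fun w => (hF w).symm
  exact (congrArg (fun f => f.hom ((cocyclesEquivKer 1 n).symm F))
    (HomologicalComplex.homologyπ_naturality pullback n)).trans
      (congrArg (π (Rep.trivial R L V) n).hom cycles_pullback)

end InducedAction

section Pairing

variable {R Γ A : Type} [CommRing R] [CommGroup Γ] [AddCommGroup A] [Module R A] {n : ℕ}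

variable (R A) in
/-- `altEval` on cohomology classes: evaluation on the torus spanned by `v`. -/
noncomputable def altPairing (v : Fin (n + 1) → Γ) :
    groupCohomology (Rep.of (1 : Representation R Γ A)) (n + 1) →ₗ[R] A :=
  (LinearMap.ker (cohClass (1 : Representation R Γ A) (n + 1))).liftQ
      (altEval R A v ∘ₗ Submodule.subtype _) (fun F hF => by
        obtain ⟨K, hK⟩ := (cohClass_eq_zero_iff 1 n F).1 hF
        simp [← hK, altEval_cochainD]) ∘ₗ
    ((cohClass (1 : Representation R Γ A) (n + 1)).quotKerEquivOfSurjective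
      (cohClass_surjective _ _)).symm

lemma altPairing_cohClass (v : Fin (n + 1) → Γ)
    (F : LinearMap.ker (cochainD (1 : Representation R Γ A) (n + 1))) :
    altPairing R A v (cohClass 1 (n + 1) F) = altEval R A v F.1 := by
  have hF := (cohClass (1 : Representation R Γ A) (n + 1)).quotKerEquivOfSurjective_apply_mk
    (cohClass_surjective _ _) F
  rw [← hF, altPairing, LinearMap.comp_apply, LinearEquiv.coe_coe, LinearEquiv.symm_apply_apply]
  rfl

end Pairing

section Minors

variable {n m k : ℕ}

/-- The matrix of the minors of `N` on the rows and columns listed by `I`: the `k`-th compound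
matrix of `N` if `I` lists the increasing `k`-tuples. -/
def minors (I : Fin m → Fin k → Fin n) (N : Matrix (Fin n) (Fin n) ℤ) :
    Matrix (Fin m) (Fin m) ℤ :=
  Matrix.of fun a b => (N.submatrix (I a) (I b)).det

/-- The cross product of coordinates of the lattice, composed with a matrix. -/
noncomputable def coordClass (N : Matrix (Fin n) (Fin n) ℤ) (s : Fin k → Fin n) :
    groupCohomology (Rep.trivial ℤ (Lat n) ℤ) k :=
  cohClass 1 k ⟨charProd fun i (l : Lat n) => (N *ᵥ l.toAdd) (s i),
    cochainD_charProd _ fun i g h => by simp [Matrix.mulVec_add]⟩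

/-- The coordinates of a class of `ℤ^n` in the basis dual to the tori listed by `I`. -/
noncomputable def torusCoords (I : Fin m → Fin (k + 1) → Fin n) :
    groupCohomology (Rep.trivial ℤ (Lat n) ℤ) (k + 1) →ₗ[ℤ] Fin m → ℤ :=
  LinearMap.pi fun a => altPairing ℤ ℤ fun p => Multiplicative.ofAdd (Pi.single (I a p) 1)

lemma torusCoords_coordClass (I : Fin m → Fin (k + 1) → Fin n) (N : Matrix (Fin n) (Fin n) ℤ)
    (b : Fin m) : torusCoords I (coordClass N (I b)) = (minors I Nᵀ).col b := by
  funext a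
  change altPairing ℤ ℤ _ (cohClass 1 (k + 1) _) = (Nᵀ.submatrix (I a) (I b)).det
  rw [altPairing_cohClass, altEval_charProd]
  congr 1
  ext p i
  simp

lemma IsGeneratedBy.injective_of_surjective {R N : Type} [CommRing R] [AddCommGroup N] [Module R N]
    (hN : IsGeneratedBy R m N) {f : N →ₗ[R] Fin m → R} (hf : Function.Surjective f) :
    Function.Injective f := by
  obtain ⟨gen, hgen⟩ := hN
  have hinj : Function.Injective (f ∘ₗ gen) :=
    OrzechProperty.injective_of_surjective_endomorphism _ (hf.comp hgen)
  exact Function.Injective.of_comp_right hinj hgen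

variable {I : Fin m → Fin (k + 1) → Fin n}

lemma torusCoords_sum_coordClass (hI : minors I 1 = 1) (z : Fin m → ℤ) :
    torusCoords I (∑ b, z b • coordClass 1 (I b)) = z := by
  simp only [map_sum, map_zsmul, torusCoords_coordClass, Matrix.transpose_one, hI]
  funext a
  simp [Finset.sum_apply, Matrix.one_apply]

lemma torusCoords_bijective (hm : n.choose (k + 1) = m) (hI : minors I 1 = 1) :
    Function.Bijective (torusCoords I) := by
  have hsurj : Function.Surjective (torusCoords I) := fun z => ⟨_, torusCoords_sum_coordClass hI z⟩
  have hgen := isGeneratedBy_groupCohomology_lat (R := ℤ) (MulEquiv.refl (Lat n)) (k + 1)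
  exact ⟨(hm ▸ hgen).injective_of_surjective hsurj, hsurj⟩

variable {q : ℕ} [NeZero q] {M : Matrix (Fin n) (Fin n) ℤ} {hq : M ^ q = 1}

lemma matAction_ofAdd_one_inv (l : Lat n) :
    matAction q M hq (Multiplicative.ofAdd 1)⁻¹ l =
      Multiplicative.ofAdd (M ^ (q - 1) *ᵥ l.toAdd) := by
  refine (matAction q M hq (Multiplicative.ofAdd 1)).injective ?_
  rw [map_inv, MulAut.apply_inv_self, matAction_ofAdd_one, toAdd_ofAdd, Matrix.mulVec_mulVec,
    mul_pow_sub_one (NeZero.ne q), hq, Matrix.one_mulVec, ofAdd_toAdd]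

lemma cohRep_matAction_coordClass (s : Fin k → Fin n) :
    (cohRep (matAction q M hq) 1 k).ρ (Multiplicative.ofAdd 1) (coordClass 1 s) =
      coordClass (M ^ (q - 1)) s :=
  cohRep_cohClass _ _ _ fun w => by
    simp only [charProd, matAction_ofAdd_one_inv]
    simp

theorem exists_equiv_cohRep_matAction (hm : n.choose (k + 1) = m) (hI : minors I 1 = 1) :
    ∃ e : cohRep (matAction q M hq) (1 : Representation ℤ (Multiplicative (ZMod q)) ℤ) (k + 1)
        ≃+ (Fin m → ℤ),
      ∀ x, e ((cohRep (matAction q M hq) 1 (k + 1)).ρ (Multiplicative.ofAdd 1) x) =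
        minors I (M ^ (q - 1))ᵀ *ᵥ e x := by
  refine ⟨(LinearEquiv.ofBijective (torusCoords I) (torusCoords_bijective hm hI)).toAddEquiv,
    fun x => ?_⟩
  let y : groupCohomology (Rep.trivial ℤ (Lat n) ℤ) (k + 1) := x
  let T : groupCohomology (Rep.trivial ℤ (Lat n) ℤ) (k + 1) →ₗ[ℤ]
      groupCohomology (Rep.trivial ℤ (Lat n) ℤ) (k + 1) :=
    (cohRep (matAction q M hq) 1 (k + 1)).ρ (Multiplicative.ofAdd 1)
  have T_coordClass (s : Fin (k + 1) → Fin n) : T (coordClass 1 s) = coordClass (M ^ (q - 1)) s :=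
    cohRep_matAction_coordClass s
  have hy : y = ∑ b, torusCoords I y b • coordClass 1 (I b) :=
    (torusCoords_bijective hm hI).1 (torusCoords_sum_coordClass hI _).symm
  change torusCoords I (T y) = minors I (M ^ (q - 1))ᵀ *ᵥ torusCoords I y
  conv_lhs => rw [hy]
  simp only [map_sum, map_zsmul, T_coordClass, torusCoords_coordClass]
  funext a
  simp [Matrix.mulVec, dotProduct, mul_comm]

end Minors

section Generator

variable {R G : Type} [CommRing R] [Group G] [Finite G] {A : Rep.{0} R G} {g : G}

lemma ρ_apply_eq_self (hg : ∀ x, x ∈ Subgroup.zpowers g) {x : A} (hx : A.ρ g x = x)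
    (h : G) : A.ρ h x = x := by
  obtain ⟨n, rfl⟩ := mem_powers_iff_mem_zpowers.2 (hg h)
  change A.ρ (g ^ n) x = x
  induction n with
  | zero => simp
  | succ n ih => rw [pow_succ, map_mul, Module.End.mul_apply, hx, ih]

lemma ρ_apply_sub_self_mem_range (hg : ∀ x, x ∈ Subgroup.zpowers g) (h : G) (x : A) :
    A.ρ h x - x ∈ LinearMap.range (A.ρ g - 1) := by
  obtain ⟨n, rfl⟩ := mem_powers_iff_mem_zpowers.2 (hg h)
  change A.ρ (g ^ n) x - x ∈ _
  induction n with
  | zero => simp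
  | succ n ih =>
    have hstep : A.ρ (g ^ (n + 1)) x - A.ρ (g ^ n) x ∈ LinearMap.range (A.ρ g - 1) :=
      ⟨A.ρ (g ^ n) x, by simp [pow_succ']⟩
    simpa using add_mem hstep ih

end Generator

section FiniteCyclic

open Rep.FiniteCyclicGroup

variable {R G : Type} [CommRing R] [CommGroup G] [Fintype G] {A : Rep.{0} R G} {g : G}

lemma groupCohomologyπEven_surjective (hg : ∀ x, x ∈ Subgroup.zpowers g)
    (i : ℕ) [NeZero i] (hi : Even i) :
    Function.Surjective (groupCohomologyπEven A g hg i hi) :=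
  have : Epi (groupCohomologyπEven A g hg i hi) :=
    epi_comp' (Iso.isIso_inv _).epi_of_iso (epi_comp _ _)
  (ModuleCat.epi_iff_surjective _).1 this

lemma groupCohomologyπOdd_surjective (hg : ∀ x, x ∈ Subgroup.zpowers g)
    (i : ℕ) (hi : Odd i) :
    Function.Surjective (groupCohomologyπOdd A g hg i hi) :=
  have : Epi (groupCohomologyπOdd A g hg i hi) :=
    epi_comp' (Iso.isIso_inv _).epi_of_iso (epi_comp _ _)
  (ModuleCat.epi_iff_surjective _).1 this

variable {c : ℕ} {φ ψ : A →+ A}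

lemma exists_norm_eq_nsmul (hg : ∀ x, x ∈ Subgroup.zpowers g)
    (hψ : ∀ x, ψ (A.ρ g x) = A.ρ g (ψ x))
    (hc : ∀ x, c • x = ∑ h, A.ρ h (φ (A.ρ h⁻¹ x)) + (A.ρ g (ψ x) - ψ x))
    {x : A} (hx : A.ρ g x = x) : ∃ y, A.ρ.norm y = c • x := by
  refine ⟨φ x, ?_⟩
  simp [hc, ρ_apply_eq_self hg hx, ← hψ, Representation.norm, LinearMap.sum_apply]

lemma exists_sub_eq_nsmul (hg : ∀ x, x ∈ Subgroup.zpowers g)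
    (hc : ∀ x, c • x = ∑ h, A.ρ h (φ (A.ρ h⁻¹ x)) + (A.ρ g (ψ x) - ψ x))
    {x : A} (hx : A.ρ.norm x = 0) : ∃ y, A.ρ g y - y = c • x := by
  have sum_φ : ∑ h, φ (A.ρ h⁻¹ x) = 0 := by
    rw [← map_sum, Fintype.sum_equiv (Equiv.inv G) (fun h => A.ρ h⁻¹ x) (fun h => A.ρ h x)
      fun _ => rfl, ← LinearMap.sum_apply]
    exact (congrArg φ hx).trans (map_zero φ)
  have sum_mem : ∑ h, A.ρ h (φ (A.ρ h⁻¹ x)) ∈ LinearMap.range (A.ρ g - 1) := by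
    rw [← sub_zero (∑ h, _), ← sum_φ, ← Finset.sum_sub_distrib]
    exact sum_mem fun h _ => ρ_apply_sub_self_mem_range hg h _
  have hcx : c • x ∈ LinearMap.range (A.ρ g - 1) := by
    rw [hc]
    exact add_mem sum_mem ⟨ψ x, rfl⟩
  exact hcx

/-- The transfer of `φ` factors through the norm on invariants, hence kills cohomology in positive
degrees; `ρ g - 1` does so because `g` acts trivially on cohomology. -/
theorem nsmul_groupCohomology_eq_zero (hg : ∀ x, x ∈ Subgroup.zpowers g)
    (hψ : ∀ x, ψ (A.ρ g x) = A.ρ g (ψ x))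
    (hc : ∀ x, c • x = ∑ h, A.ρ h (φ (A.ρ h⁻¹ x)) + (A.ρ g (ψ x) - ψ x))
    {i : ℕ} (hi : i ≠ 0) (z : groupCohomology A i) : c • z = 0 := by
  have : NeZero i := ⟨hi⟩
  rcases Nat.even_or_odd i with heven | hodd
  · obtain ⟨x, rfl⟩ := groupCohomologyπEven_surjective hg i heven z
    rw [← map_nsmul]
    exact (groupCohomologyπEven_eq_zero_iff A g hg i heven _).2
      (exists_norm_eq_nsmul hg hψ hc (sub_eq_zero.1 x.2))
  · obtain ⟨x, rfl⟩ := groupCohomologyπOdd_surjective hg i hodd z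
    rw [← map_nsmul]
    exact (groupCohomologyπOdd_eq_zero_iff A g hg i hodd _).2 (exists_sub_eq_nsmul hg hc x.2)

lemma card_nsmul_groupCohomology_eq_zero (hg : ∀ x, x ∈ Subgroup.zpowers g)
    {i : ℕ} (hi : i ≠ 0) (z : groupCohomology A i) :
    Fintype.card G • z = 0 :=
  nsmul_groupCohomology_eq_zero hg (φ := AddMonoidHom.id A) (ψ := 0) (by simp) (by simp) hi z

end FiniteCyclic

open Rep.FiniteCyclicGroup in
lemma IsGeneratedBy.groupCohomology_even {R G : Type} [CommRing R] [CommGroup G] [Finite G]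
    [IsDomain R] [IsPrincipalIdealRing R] {A : Rep.{0} R G} {g : G}
    (hg : ∀ x, x ∈ Subgroup.zpowers g) {n : ℕ} (hA : IsGeneratedBy R n A) (i : ℕ) [NeZero i]
    (hi : Even i) :
    IsGeneratedBy R n (groupCohomology A i) :=
  have := Fintype.ofFinite G
  (hA.submodule (LinearMap.ker (A.applyAsHom g - 𝟙 A).hom.toLinearMap)).of_surjective
    (groupCohomologyπEven A g hg i hi).hom (groupCohomologyπEven_surjective hg i hi)

section CyclicHolonomy

variable {R : Type} [CommRing R] {q m : ℕ} {A : Rep.{0} R (Multiplicative (ZMod q))}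

lemma mem_zpowers_ofAdd_one [NeZero q] (x : Multiplicative (ZMod q)) :
    x ∈ Subgroup.zpowers (Multiplicative.ofAdd (1 : ZMod q)) :=
  ⟨x.toAdd.val, (zpow_natCast _ _).trans (ofAdd_one_pow_val x)⟩

variable {B : Matrix (Fin m) (Fin m) ℤ} {e : A ≃+ (Fin m → ℤ)}

lemma equiv_ρ_apply [NeZero q] (he : ∀ x, e (A.ρ (Multiplicative.ofAdd 1) x) = B *ᵥ e x)
    (h : Multiplicative (ZMod q)) (x : A) : e (A.ρ h x) = B ^ h.toAdd.val *ᵥ e x := by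
  conv_lhs => rw [← ofAdd_one_pow_val h]
  induction h.toAdd.val with
  | zero => simp
  | succ n ih =>
    rw [pow_succ', pow_succ', map_mul, Module.End.mul_apply, he, ih, Matrix.mulVec_mulVec]

variable (e) in
/-- The endomorphism whose matrix in the coordinates `e` is `N`. -/
def endOfMatrix (N : Matrix (Fin m) (Fin m) ℤ) : A →+ A :=
  (e.symm : (Fin m → ℤ) →+ A).comp (N.mulVecLin.toAddMonoidHom.comp (e : A →+ (Fin m → ℤ)))

lemma equiv_endOfMatrix_apply (N : Matrix (Fin m) (Fin m) ℤ) (x : A) :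
    e (endOfMatrix e N x) = N *ᵥ e x :=
  e.apply_symm_apply _

variable [NeZero q]

lemma equiv_sum_ρ_endOfMatrix (he : ∀ x, e (A.ρ (Multiplicative.ofAdd 1) x) = B *ᵥ e x)
    (φ : Matrix (Fin m) (Fin m) ℤ) (x : A) :
    e (∑ h, A.ρ h (endOfMatrix e φ (A.ρ h⁻¹ x))) =
      (∑ h : ZMod q, B ^ h.val * φ * B ^ (-h).val) *ᵥ e x := by
  simp only [map_sum, equiv_ρ_apply he, equiv_endOfMatrix_apply, Matrix.sum_mulVec,
    ← Matrix.mulVec_mulVec]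
  exact Fintype.sum_equiv Multiplicative.toAdd _ _ fun h => rfl

theorem nsmul_groupCohomology_eq_zero_of_matrix {φ ψ : Matrix (Fin m) (Fin m) ℤ} {c : ℕ}
    (he : ∀ x, e (A.ρ (Multiplicative.ofAdd 1) x) = B *ᵥ e x) (hψ : Commute ψ B)
    (hc : c • (1 : Matrix (Fin m) (Fin m) ℤ) =
      ∑ h : ZMod q, B ^ h.val * φ * B ^ (-h).val + (B - 1) * ψ)
    {i : ℕ} (hi : i ≠ 0) (z : groupCohomology A i) : c • z = 0 := by
  have commutes (x : A) : endOfMatrix e ψ (A.ρ (Multiplicative.ofAdd 1) x) =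
      A.ρ (Multiplicative.ofAdd 1) (endOfMatrix e ψ x) := e.injective <| by
    rw [equiv_endOfMatrix_apply, he, he, equiv_endOfMatrix_apply, Matrix.mulVec_mulVec,
      Matrix.mulVec_mulVec, hψ.eq]
  have decomposition (x : A) : c • x = ∑ h, A.ρ h (endOfMatrix e φ (A.ρ h⁻¹ x)) +
      (A.ρ (Multiplicative.ofAdd 1) (endOfMatrix e ψ x) - endOfMatrix e ψ x) := e.injective <| by
    have hx := congrArg (· *ᵥ e x) hc
    simp only [Matrix.smul_mulVec, Matrix.one_mulVec, Matrix.add_mulVec,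
      Matrix.sub_mul, Matrix.one_mul, Matrix.sub_mulVec, ← Matrix.mulVec_mulVec] at hx
    rw [map_nsmul, hx, map_add, map_sub, equiv_sum_ρ_endOfMatrix he, he, equiv_endOfMatrix_apply]
  exact nsmul_groupCohomology_eq_zero (A := A) mem_zpowers_ofAdd_one commutes decomposition hi z

end CyclicHolonomy

lemma nsmul_zsmul_eq_zero_or_eq {N : Type*} [AddCommGroup N] {n : ℕ} {y : N}
    (hy : (2 * n) • y = 0) (k : ℤ) : n • k • y = 0 ∨ n • k • y = n • y := by
  have hy' : ((2 * n : ℕ) : ℤ) • y = 0 := (natCast_zsmul _ _).trans hy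
  simp only [← natCast_zsmul, smul_smul]
  rcases Int.even_or_odd' k with ⟨l, rfl | rfl⟩
  · left
    rw [show (n : ℤ) * (2 * l) = l * (2 * n : ℕ) by push_cast; ring, mul_smul, hy', smul_zero]
  · right
    rw [show (n : ℤ) * (2 * l + 1) = l * (2 * n : ℕ) + n by push_cast; ring, add_smul, mul_smul,
      hy', smul_zero, zero_add]

lemma IsGeneratedBy.exists_nsmul_eq_zero_or_eq {N : Type} [AddCommGroup N] [Module ℤ N]
    (hN : IsGeneratedBy ℤ 1 N) {n : ℕ} (hn : ∀ z : N, (2 * n) • z = 0) :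
    ∃ r : N, ∀ z : N, n • z = 0 ∨ n • z = r := by
  obtain ⟨f, hf⟩ := hN
  refine ⟨n • f 1, fun z => ?_⟩
  obtain ⟨w, rfl⟩ := hf z
  have hw : w = w 0 • (1 : Fin 1 → ℤ) := funext fun i => by simp [Subsingleton.elim i 0]
  rw [hw, map_zsmul]
  exact nsmul_zsmul_eq_zero_or_eq (hn _) (w 0)

theorem nsmul_cohOfCoh_eq_zero {n q m k r c i : ℕ} [NeZero q] {M : Matrix (Fin n) (Fin n) ℤ}
    (hq : M ^ q = 1) (I : Fin m → Fin (k + 1) → Fin n) (φ : Matrix (Fin m) (Fin m) ℤ)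
    (a : Fin r → ℤ) (hm : n.choose (k + 1) = m) (hI : minors I 1 = 1)
    (hc : let B := minors I (M ^ (q - 1))ᵀ
      c • (1 : Matrix (Fin m) (Fin m) ℤ) = ∑ h : ZMod q, B ^ h.val * φ * B ^ (-h).val +
        (B - 1) * ∑ t, a t • B ^ (t : ℕ))
    (hi : i ≠ 0) (z : cohOfCoh q M hq i (k + 1)) : c • z = 0 := by
  obtain ⟨e, he⟩ := exists_equiv_cohRep_matAction (hq := hq) hm hI
  exact nsmul_groupCohomology_eq_zero_of_matrix he
    (Commute.sum_left _ _ _ fun t _ => ((Commute.refl _).pow_left _).smul_left _) hc hi z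

section Certificates

variable {i : ℕ}

-- The matrix `φ` and the coefficients `a` were found by solving linear equations over `ℤ`.
lemma four_nsmul_Hc_one (hi : i ≠ 0) (z : Hc i 1) : 4 • z = 0 :=
  nsmul_cohOfCoh_eq_zero holM_pow ![![0], ![1], ![2], ![3], ![4]] 0 ![-3, -2, -2, -2, -1]
    (by decide) (by decide +kernel) (by decide +kernel) hi z

lemma four_nsmul_Hc_two (hi : i ≠ 0) (z : Hc i 2) : 4 • z = 0 :=
  nsmul_cohOfCoh_eq_zero holM_pow
    ![![0, 1], ![0, 2], ![0, 3], ![0, 4], ![1, 2], ![1, 3], ![1, 4], ![2, 3], ![2, 4], ![3, 4]]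
    (single 4 2 2 + single 5 5 1) ![-4, -4, -2, -2, -2, -2]
    (by decide) (by decide +kernel) (by decide +kernel) hi z

lemma four_nsmul_Hc_three (hi : i ≠ 0) (z : Hc i 3) : 4 • z = 0 :=
  nsmul_cohOfCoh_eq_zero holM_pow
    ![![0, 1, 2], ![0, 1, 3], ![0, 1, 4], ![0, 2, 3], ![0, 2, 4], ![0, 3, 4], ![1, 2, 3],
      ![1, 2, 4], ![1, 3, 4], ![2, 3, 4]]
    (single 0 5 2 + single 4 4 1) ![-4, -4, -2, -2, -2, -2]
    (by decide) (by decide +kernel) (by decide +kernel) hi z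

lemma four_nsmul_Hc_four (hi : i ≠ 0) (z : Hc i 4) : 4 • z = 0 :=
  nsmul_cohOfCoh_eq_zero holM_pow
    ![![0, 1, 2, 3], ![0, 1, 2, 4], ![0, 1, 3, 4], ![0, 2, 3, 4], ![1, 2, 3, 4]]
    (single 0 0 1) ![0, -1, -2, -3] (by decide) (by decide +kernel) (by decide +kernel) hi z

lemma four_nsmul_Hc_five (hi : i ≠ 0) (z : Hc i 5) : 4 • z = 0 :=
  nsmul_cohOfCoh_eq_zero holM_pow ![![0, 1, 2, 3, 4]] 0 ![-2]
    (by decide) (by decide +kernel) (by decide +kernel) hi z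

end Certificates

lemma groupCohomology_subsingleton {R Γ : Type} [CommRing R] [Group Γ] (A : Rep.{0} R Γ)
    [Subsingleton A] (i : ℕ) : Subsingleton (groupCohomology A i) :=
  have : Subsingleton (cocycles A i) :=
    ((ModuleCat.mono_iff_injective (iCocycles A i)).1 inferInstance).subsingleton
  (π_surjective A i).subsingleton

lemma Hc_subsingleton {i j : ℕ} (hj : 5 < j) : Subsingleton (Hc i j) := by
  obtain ⟨f, hf⟩ := isGeneratedBy_groupCohomology_lat (R := ℤ) (MulEquiv.refl (Lat 5)) j
  have : IsEmpty (Fin (Nat.choose 5 j)) := by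
    rw [Nat.choose_eq_zero_of_lt hj]
    infer_instance
  have : Subsingleton (cohRep (matAction 8 holM holM_pow) (1 : Representation ℤ _ ℤ) j) :=
    hf.subsingleton
  exact groupCohomology_subsingleton _ i

lemma four_nsmul_Hc_eq_zero {i j : ℕ} (hij : i + j = 8) (hj : j ≠ 0) (z : Hc i j) :
    4 • z = 0 := by
  rcases lt_or_ge 5 j with hj5 | hj5
  · exact (Hc_subsingleton hj5).elim _ _
  have hi : i ≠ 0 := by omega
  interval_cases j
  · exact absurd rfl hj
  · exact four_nsmul_Hc_one hi z
  · exact four_nsmul_Hc_two hi z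
  · exact four_nsmul_Hc_three hi z
  · exact four_nsmul_Hc_four hi z
  · exact four_nsmul_Hc_five hi z

lemma exists_four_nsmul_Hc_zero_eq :
    ∃ r : Hc 8 0, ∀ z : Hc 8 0, 4 • z = 0 ∨ 4 • z = r := by
  have cyclic : IsGeneratedBy ℤ 1 (Hc 8 0) :=
    IsGeneratedBy.groupCohomology_even (A := cohRep (matAction 8 holM holM_pow) 1 0)
      mem_zpowers_ofAdd_one (isGeneratedBy_groupCohomology_zero (R := ℤ) (Lat 5)) 8 (by decide)
  exact cyclic.exists_nsmul_eq_zero_or_eq fun z =>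
    card_nsmul_groupCohomology_eq_zero (A := cohRep (matAction 8 holM holM_pow) 1 0)
      mem_zpowers_ofAdd_one (by decide) z

lemma four_nsmul_eq_of_apply_eq
    (e : H 8 ≃+ ((p : {p : ℕ × ℕ // p.1 + p.2 = 8}) → Hc p.1.1 p.1.2)) {x y : H 8}
    (hxy : 4 • e x ⟨(8, 0), rfl⟩ = 4 • e y ⟨(8, 0), rfl⟩) : 4 • x = 4 • y := by
  refine e.injective (funext fun ⟨⟨i, j⟩, hij⟩ => ?_)
  simp only [map_nsmul, Pi.smul_apply]
  rcases eq_or_ne j 0 with rfl | hj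
  · obtain rfl : i = 8 := hij
    exact hxy
  · rw [four_nsmul_Hc_eq_zero hij hj, four_nsmul_Hc_eq_zero hij hj]

end Crystal

theorem Z8_example_fails_conjecture :
    ∃ k : ℕ, ¬ Nonempty
      (H k ≃+ ((p : {p : ℕ × ℕ // p.1 + p.2 = k}) → Hc p.1.1 p.1.2)) := by
  refine ⟨8, fun ⟨e⟩ => ?_⟩
  obtain ⟨a, b, ha, hb, hab⟩ := Crystal.exists_four_nsmul_ne
  obtain ⟨r, hr⟩ := Crystal.exists_four_nsmul_Hc_zero_eq
  have apply_eq (x : H 8) (hx : 4 • x ≠ 0) : 4 • e x ⟨(8, 0), rfl⟩ = r :=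
    (hr _).resolve_left fun h => hx <| by
      simpa using Crystal.four_nsmul_eq_of_apply_eq e (x := x) (y := 0) (by simpa using h)
  exact hab (Crystal.four_nsmul_eq_of_apply_eq e ((apply_eq a ha).trans (apply_eq b hb).symm))
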